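/- Let n ≥ 5. There is a constant C (depending only on n and η) such that for all x ∈ ℝ^{n-1}, all t ∈ ℝ, and all s ∈ (−1/10, 1/10), the inverse Fourier transform of the truncated surface measure satisfies |(σ_s^{(0)})^∨(x,t)| ≤ C(1+|t|)^{(2−n)/2}. -/

import Mathlib

open MeasureTheory Real FourierTransform Filter
open scoped ENNReal RealInnerProductSpace

noncomputable section

/-- `ℝⁿ = ℝ^{n-1} × ℝ`, realized as `EuclideanSpace ℝ (Fin (m+1))` with `m = n-1`
spatial coordinates and the last coordinate playing the role of time. -/
abbrev Spacetime (m : ℕ) := EuclideanSpace ℝ (Fin (m + 1))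

namespace Wave

variable {m : ℕ}

/-- The time coordinate `τ` of a point `z = (ξ, τ)`. -/
def timeCoord (z : Spacetime m) : ℝ := z (Fin.last m)

/-- `g(ξ,τ) = |ξ|² - τ²`, written using `|ξ|² = ‖z‖² - τ²`. -/
def waveSymbol (z : Spacetime m) : ℝ := ‖z‖ ^ 2 - 2 * timeCoord z ^ 2

/-- The canonical surface measure `σ_s` on the level set `g⁻¹(s)` of
`g(ξ,τ) = |ξ|² - τ²`: the `(n-1)`-dimensional Hausdorff measure restricted to
`g⁻¹(s)` (with the origin deleted). -/
def levelMeasure (m : ℕ) (s : ℝ) : Measure (Spacetime m) :=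
  (μH[(m : ℝ)]).restrict {z | waveSymbol z = s ∧ z ≠ 0}

/-- `(σ_s^{(0)})^∨(w)`: the inverse Fourier transform of the truncated surface measure
`σ_s^{(0)} = η σ_s`, evaluated at `w = (x,t)`. -/
def sigmaCheck (η : Spacetime m → ℝ) (s : ℝ) (w : Spacetime m) : ℂ :=
  ∫ z, (η z : ℂ) * Complex.exp (2 * (π : ℂ) * Complex.I * ((⟪z, w⟫ : ℝ) : ℂ))
    ∂(levelMeasure m s)

end Wave

open Wave

theorem hausdorffMeasure_image_le_of_dist_le {X Y Z : Type*} [PseudoMetricSpace X]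
    [MetricSpace Y] [MeasurableSpace Y] [BorelSpace Y]
    [MetricSpace Z] [MeasurableSpace Z] [BorelSpace Z]
    {A : X → Y} {B : X → Z} {S : Set X} {K : NNReal} {d : ℝ} (hd : 0 ≤ d)
    (h : ∀ y ∈ S, ∀ z ∈ S, dist (A y) (A z) ≤ K * dist (B y) (B z)) :
    μH[d] (A '' S) ≤ (K : ℝ≥0∞) ^ d * μH[d] (B '' S) := by
  rcases S.eq_empty_or_nonempty with rfl | ⟨x₀, hx₀⟩
  · simp
  have : Nonempty X := ⟨x₀⟩
  have hmem : ∀ w ∈ B '' S, Function.invFunOn B S w ∈ S ∧ B (Function.invFunOn B S w) = w :=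
    fun w hw => ⟨Function.invFunOn_mem hw, Function.invFunOn_eq hw⟩
  have hlip : LipschitzOnWith K (A ∘ Function.invFunOn B S) (B '' S) := by
    refine LipschitzOnWith.of_dist_le_mul fun u hu v hv => ?_
    have := h _ (hmem u hu).1 _ (hmem v hv).1
    rwa [(hmem u hu).2, (hmem v hv).2] at this
  refine le_trans (measure_mono ?_) (hlip.hausdorffMeasure_image_le hd)
  rintro _ ⟨y, hy, rfl⟩
  refine ⟨B y, ⟨y, hy, rfl⟩, ?_⟩
  have hB := hmem (B y) ⟨y, hy, rfl⟩
  have := h _ hB.1 _ hy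
  rw [hB.2, dist_self, mul_zero] at this
  exact dist_le_zero.1 this

/-- A measure inequality which holds locally on an open set holds on that set. -/
theorem measure_restrict_le_of_locally {X : Type*} [TopologicalSpace X]
    [SecondCountableTopology X] [MeasurableSpace X] [BorelSpace X] {μ ν : Measure X} {U : Set X}
    (hU : IsOpen U)
    (h : ∀ x ∈ U, ∃ W ∈ nhds x, ∀ S ⊆ W, MeasurableSet S → μ S ≤ ν S) :
    μ.restrict U ≤ ν.restrict U := by
  choose! W hW hle using h
  obtain ⟨t, htU, htc, hcov⟩ := TopologicalSpace.countable_cover_nhdsWithin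
    (f := fun x => interior (W x)) (s := U)
    (fun x hx => mem_nhdsWithin_of_mem_nhds (interior_mem_nhds.2 (hW x hx)))
  rcases t.eq_empty_or_nonempty with rfl | hne
  · have : U = ∅ := by simpa using hcov
    simp [this]
  obtain ⟨e, rfl⟩ := htc.exists_eq_range hne
  let D : ℕ → Set X := disjointed fun i => interior (W (e i))
  have hDm : ∀ i, MeasurableSet (D i) := fun i =>
    MeasurableSet.disjointed (fun j => isOpen_interior.measurableSet) i
  have hDU : ⋃ i, D i = ⋃ i, interior (W (e i)) := iUnion_disjointed
  refine Measure.le_iff.2 fun S hS => ?_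
  rw [Measure.restrict_apply hS, Measure.restrict_apply hS]
  have hSU : S ∩ U = ⋃ i, (S ∩ U ∩ D i) := by
    rw [← Set.inter_iUnion, hDU]
    refine (Set.inter_eq_left.2 fun x hx => ?_).symm
    simpa using hcov hx.2
  have hm : ∀ i, MeasurableSet (S ∩ U ∩ D i) := fun i => (hS.inter hU.measurableSet).inter (hDm i)
  have hd : Pairwise (Function.onFun Disjoint fun i => S ∩ U ∩ D i) := fun i j hij =>
    (disjoint_disjointed _ hij).mono Set.inter_subset_right Set.inter_subset_right
  rw [hSU, measure_iUnion hd hm, measure_iUnion hd hm]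
  refine ENNReal.tsum_le_tsum fun i => hle (e i) (htU ⟨i, rfl⟩) _ ?_ (hm i)
  exact Set.inter_subset_right.trans ((disjointed_subset _ i).trans interior_subset)

section Graph

variable {V : Type*} [NormedAddCommGroup V] [InnerProductSpace ℝ V]

/-- The stretch of `V` along `g` by the factor `√(1 + ‖g‖²)`. -/
def gradientStretch (g : V) : V →ₗ[ℝ] V :=
  LinearMap.transvection (innerₗ V g) ((1 + √(1 + ‖g‖ ^ 2))⁻¹ • g)

theorem gradientStretch_apply (g v : V) :
    gradientStretch g v = v + (⟪g, v⟫ * (1 + √(1 + ‖g‖ ^ 2))⁻¹) • g := by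
  simp [gradientStretch, LinearMap.transvection, smul_smul]

theorem norm_gradientStretch_sq (g v : V) :
    ‖gradientStretch g v‖ ^ 2 = ‖v‖ ^ 2 + ⟪g, v⟫ ^ 2 := by
  rw [gradientStretch_apply, norm_add_sq_real, norm_smul, inner_smul_right, real_inner_comm]
  have hq : √(1 + ‖g‖ ^ 2) ^ 2 = 1 + ‖g‖ ^ 2 := Real.sq_sqrt (by positivity)
  have hq0 : 0 ≤ √(1 + ‖g‖ ^ 2) := Real.sqrt_nonneg _
  rw [mul_pow, Real.norm_eq_abs, sq_abs]
  have hg : ‖g‖ ^ 2 = √(1 + ‖g‖ ^ 2) ^ 2 - 1 := by linarith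
  generalize √(1 + ‖g‖ ^ 2) = q at *
  rw [hg]
  have : 1 + q ≠ 0 := by positivity
  field_simp
  ring

theorem det_gradientStretch [FiniteDimensional ℝ V] (g : V) :
    LinearMap.det (gradientStretch g) = √(1 + ‖g‖ ^ 2) := by
  rw [gradientStretch, LinearMap.transvection.det]
  have hq : √(1 + ‖g‖ ^ 2) ^ 2 = 1 + ‖g‖ ^ 2 := Real.sq_sqrt (by positivity)
  have hq0 : 0 ≤ √(1 + ‖g‖ ^ 2) := Real.sqrt_nonneg _
  simp only [innerₗ_apply_apply, inner_smul_right, real_inner_self_eq_norm_sq]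
  have hg : ‖g‖ ^ 2 = √(1 + ‖g‖ ^ 2) ^ 2 - 1 := by linarith
  generalize √(1 + ‖g‖ ^ 2) = q at *
  rw [hg]
  have : 1 + q ≠ 0 := by positivity
  field_simp
  ring

/-- Comparison of two Pythagorean sums whose second legs differ by at most `ε` times the first. -/
theorem le_one_add_mul_of_sq_eq {A B p a b ε : ℝ} (hB : 0 ≤ B)
    (hε : 0 ≤ ε) (hA2 : A ^ 2 = p ^ 2 + a ^ 2) (hB2 : B ^ 2 = p ^ 2 + b ^ 2)
    (hab : |a - b| ≤ ε * p) : A ≤ (1 + ε) * B := by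
  have hpB : p ≤ B := abs_le_of_sq_le_sq' (by nlinarith) hB |>.2
  have hbB : |b| ≤ B := abs_le_of_sq_le_sq (by nlinarith) hB
  have hc : |a - b| ≤ ε * B := hab.trans (mul_le_mul_of_nonneg_left hpB hε)
  refine abs_le_of_sq_le_sq' ?_ (by positivity) |>.2
  have h1 : a ^ 2 = b ^ 2 + 2 * b * (a - b) + (a - b) ^ 2 := by ring
  have h2 : (a - b) ^ 2 ≤ (ε * B) ^ 2 := sq_le_sq' (by linarith [(abs_le.1 hc).1]) (abs_le.1 hc).2
  have h3 : b * (a - b) ≤ B * (ε * B) := by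
    calc b * (a - b) ≤ |b * (a - b)| := le_abs_self _
      _ = |b| * |a - b| := abs_mul _ _
      _ ≤ B * (ε * B) := mul_le_mul hbB hc (abs_nonneg _) hB
  nlinarith

variable [FiniteDimensional ℝ V] [MeasurableSpace V] [BorelSpace V]
  {E : Type*} [MetricSpace E] [MeasurableSpace E] [BorelSpace E]

theorem graph_measure_locally {Γ : V → E} {f : V → ℝ} {grad : V → V} {U : Set V}
    (hΓ : ∀ y z, dist (Γ y) (Γ z) ^ 2 = ‖y - z‖ ^ 2 + (f y - f z) ^ 2)
    (hU : IsOpen U)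
    (hf : ∀ x ∈ U, HasStrictFDerivAt f (innerSL ℝ (grad x)) x)
    (hgrad : ContinuousOn grad U) {ε : ℝ} (hε : 0 < ε) {x : V} (hx : x ∈ U) :
    ∃ W ∈ nhds x, ∀ S ⊆ W, MeasurableSet S →
      μH[(Module.finrank ℝ V : ℝ)] (Γ '' S) ≤ ENNReal.ofReal (1 + ε) ^ (Module.finrank ℝ V + 1) *
        ∫⁻ y in S, ENNReal.ofReal √(1 + ‖grad y‖ ^ 2) ∂μH[(Module.finrank ℝ V : ℝ)] ∧
      ∫⁻ y in S, ENNReal.ofReal √(1 + ‖grad y‖ ^ 2) ∂μH[(Module.finrank ℝ V : ℝ)] ≤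
        ENNReal.ofReal (1 + ε) ^ (Module.finrank ℝ V + 1) *
          μH[(Module.finrank ℝ V : ℝ)] (Γ '' S) := by
  set d := Module.finrank ℝ V with hd
  set μ : Measure V := μH[(d : ℝ)] with hμ
  have : μ.IsAddHaarMeasure := isAddHaarMeasure_hausdorffMeasure
  let q : V → ℝ := fun y => √(1 + ‖grad y‖ ^ 2)
  have hq1 : ∀ y, 0 < q y := fun y => Real.sqrt_pos.2 (by positivity)
  have hqc : ContinuousAt q x :=
    ((continuousAt_const.add ((hgrad.continuousAt (hU.mem_nhds hx)).norm.pow 2)).sqrt)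
  have hW1 : ∀ᶠ y in nhds x, q y < (1 + ε) * q x :=
    hqc.eventually_lt_const (by nlinarith [hq1 x])
  have hW2 : ∀ᶠ y in nhds x, q x < (1 + ε) * q y :=
    (hqc.const_mul (1 + ε)).eventually_const_lt (by nlinarith [hq1 x])
  have hlin := (hf x hx).isLittleO.def hε
  rw [nhds_prod_eq] at hlin
  obtain ⟨W₀, hW₀, hW₀'⟩ := (Filter.eventually_prod_self_iff'.1 hlin)
  refine ⟨W₀ ∩ {y | q y < (1 + ε) * q x ∧ q x < (1 + ε) * q y},
    inter_mem hW₀ (hW1.and hW2), fun S hS hSm => ?_⟩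
  let T := gradientStretch (grad x)
  have hcmp : ∀ y ∈ S, ∀ z ∈ S, |f y - f z - ⟪grad x, y - z⟫| ≤ ε * ‖y - z‖ := fun y hy z hz => by
    simpa using hW₀' y (hS hy).1 z (hS hz).1
  have hTd : ∀ y z, dist (T y) (T z) ^ 2 = ‖y - z‖ ^ 2 + ⟪grad x, y - z⟫ ^ 2 := fun y z => by
    rw [dist_eq_norm, ← map_sub, norm_gradientStretch_sq]
  have hK : ((1 + ε).toNNReal : ℝ) = 1 + ε := Real.coe_toNNReal _ (by positivity)
  have hle1 : μH[(d : ℝ)] (Γ '' S) ≤ ((1 + ε).toNNReal : ℝ≥0∞) ^ (d : ℝ) * μ (T '' S) :=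
    hausdorffMeasure_image_le_of_dist_le d.cast_nonneg fun y hy z hz => by
      rw [hK]
      exact le_one_add_mul_of_sq_eq dist_nonneg hε.le (hΓ y z)
        (hTd y z) (hcmp y hy z hz)
  have hle2 : μ (T '' S) ≤ ((1 + ε).toNNReal : ℝ≥0∞) ^ (d : ℝ) * μH[(d : ℝ)] (Γ '' S) :=
    hausdorffMeasure_image_le_of_dist_le d.cast_nonneg fun y hy z hz => by
      rw [hK]
      exact le_one_add_mul_of_sq_eq dist_nonneg hε.le (hTd y z)
        (hΓ y z) (by rw [abs_sub_comm]; exact hcmp y hy z hz)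
  have hTS : μ (T '' S) = ENNReal.ofReal (q x) * μ S := by
    rw [Measure.addHaar_image_linearMap, det_gradientStretch, abs_of_pos (hq1 x)]
  rw [hTS, ENNReal.rpow_natCast] at hle1 hle2
  have hc : ((1 + ε).toNNReal : ℝ≥0∞) = ENNReal.ofReal (1 + ε) := rfl
  rw [hc] at hle1 hle2
  have hmul : ∀ r : ℝ, ENNReal.ofReal ((1 + ε) * r) = ENNReal.ofReal (1 + ε) * ENNReal.ofReal r :=
    fun r => ENNReal.ofReal_mul (by positivity)
  have hi1 : ENNReal.ofReal (q x) * μ S ≤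
      ENNReal.ofReal (1 + ε) * ∫⁻ y in S, ENNReal.ofReal (q y) ∂μ := by
    rw [← lintegral_const_mul' _ _ ENNReal.ofReal_ne_top, ← setLIntegral_const]
    refine setLIntegral_mono' hSm fun y hy => ?_
    rw [← hmul]
    exact ENNReal.ofReal_le_ofReal (hS hy).2.2.le
  have hi2 : ∫⁻ y in S, ENNReal.ofReal (q y) ∂μ ≤
      ENNReal.ofReal (1 + ε) * (ENNReal.ofReal (q x) * μ S) := by
    rw [← mul_assoc, ← hmul, ← setLIntegral_const]
    exact setLIntegral_mono' hSm fun y hy => ENNReal.ofReal_le_ofReal (hS hy).2.1.le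
  constructor
  · calc _ ≤ _ := hle1
      _ ≤ ENNReal.ofReal (1 + ε) ^ d *
          (ENNReal.ofReal (1 + ε) * ∫⁻ y in S, ENNReal.ofReal (q y) ∂μ) := by gcongr
      _ = _ := by rw [pow_succ, mul_assoc]
  · calc _ ≤ _ := hi2
      _ ≤ ENNReal.ofReal (1 + ε) * (ENNReal.ofReal (1 + ε) ^ d * μH[(d : ℝ)] (Γ '' S)) := by gcongr
      _ = _ := by rw [pow_succ', mul_assoc]

theorem measure_le_of_forall_one_add_pow_smul_le {X : Type*} [MeasurableSpace X]
    {μ ν : Measure X} (k : ℕ)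
    (h : ∀ ε : ℝ, 0 < ε → μ ≤ ENNReal.ofReal (1 + ε) ^ k • ν) : μ ≤ ν := by
  refine Measure.le_iff.2 fun S _ => ?_
  have hlim : Tendsto (fun ε : ℝ => ENNReal.ofReal (1 + ε) ^ k * ν S) (nhdsWithin 0 (Set.Ioi 0))
      (nhds (1 * ν S)) := by
    refine ENNReal.Tendsto.mul_const ?_ (Or.inl one_ne_zero)
    have : Continuous fun ε : ℝ => ENNReal.ofReal (1 + ε) ^ k :=
      (ENNReal.continuous_pow k).comp (ENNReal.continuous_ofReal.comp (by fun_prop))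
    simpa using (this.tendsto 0).mono_left nhdsWithin_le_nhds
  rw [one_mul] at hlim
  refine ge_of_tendsto hlim ?_
  filter_upwards [self_mem_nhdsWithin] with ε hε
  simpa using h ε hε S

/-- The area formula for a graph: the Hausdorff measure of the graph of `f` over `U` has density
`√(1 + ‖∇f‖²)`. -/
theorem graph_measure {Γ : V → E} {f : V → ℝ} {grad : V → V} {U : Set V}
    (hΓ : ∀ y z, dist (Γ y) (Γ z) ^ 2 = ‖y - z‖ ^ 2 + (f y - f z) ^ 2)
    (hΓm : MeasurableEmbedding Γ)
    (hU : IsOpen U)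
    (hf : ∀ x ∈ U, HasStrictFDerivAt f (innerSL ℝ (grad x)) x)
    (hgrad : ContinuousOn grad U) :
    μH[(Module.finrank ℝ V : ℝ)].restrict (Γ '' U) =
      Measure.map Γ ((μH[(Module.finrank ℝ V : ℝ)].restrict U).withDensity
        fun y => ENNReal.ofReal √(1 + ‖grad y‖ ^ 2)) := by
  set d := Module.finrank ℝ V with hd
  set q : V → ℝ≥0∞ := fun y => ENNReal.ofReal √(1 + ‖grad y‖ ^ 2)
  have hmain : (Measure.comap Γ μH[(d : ℝ)]).restrict U = (μH[(d : ℝ)].withDensity q).restrict U := by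
    apply le_antisymm
    · refine measure_le_of_forall_one_add_pow_smul_le (d + 1) fun ε hε => ?_
      rw [← Measure.restrict_smul]
      refine measure_restrict_le_of_locally hU fun x hx => ?_
      obtain ⟨W, hW, h⟩ := graph_measure_locally hΓ hU hf hgrad hε hx
      refine ⟨W, hW, fun S hS hSm => ?_⟩
      rw [hΓm.comap_apply, Measure.smul_apply, withDensity_apply _ hSm]
      exact (h S hS hSm).1
    · refine measure_le_of_forall_one_add_pow_smul_le (d + 1) fun ε hε => ?_
      rw [← Measure.restrict_smul]
      refine measure_restrict_le_of_locally hU fun x hx => ?_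
      obtain ⟨W, hW, h⟩ := graph_measure_locally hΓ hU hf hgrad hε hx
      refine ⟨W, hW, fun S hS hSm => ?_⟩
      rw [Measure.smul_apply, hΓm.comap_apply, withDensity_apply _ hSm]
      exact (h S hS hSm).2
  rw [← restrict_withDensity hU.measurableSet, ← hmain]
  ext S hS
  rw [Measure.map_apply hΓm.measurable hS, Measure.restrict_apply (hΓm.measurable hS),
    Measure.restrict_apply hS, hΓm.comap_apply, Set.inter_comm, Set.inter_comm _ U,
    Set.image_inter_preimage]

end Graph

/-- The truncated power `u₊ ^ p`, with value `0` at every `u ≤ 0`. -/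
def powPos (p u : ℝ) : ℝ := if 0 < u then u ^ p else 0

theorem powPos_of_pos {p u : ℝ} (hu : 0 < u) : powPos p u = u ^ p := if_pos hu

theorem powPos_of_nonpos {p u : ℝ} (hu : u ≤ 0) : powPos p u = 0 := if_neg hu.not_gt

theorem powPos_nonneg (p u : ℝ) : 0 ≤ powPos p u := by
  unfold powPos; split_ifs with h
  · exact (rpow_pos_of_pos h p).le
  · exact le_rfl

theorem measurable_powPos (p : ℝ) : Measurable (powPos p) :=
  Measurable.ite measurableSet_Ioi (measurable_id.pow_const p) measurable_const

theorem continuous_powPos {p : ℝ} (hp : 0 < p) : Continuous (powPos p) := by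
  have h : powPos p = fun u => (max u 0) ^ p := by
    ext u
    rcases lt_or_ge 0 u with hu | hu
    · rw [powPos_of_pos hu, max_eq_left hu.le]
    · rw [powPos_of_nonpos hu, max_eq_right hu, zero_rpow hp.ne']
  rw [h]
  exact (continuous_id.max continuous_const).rpow_const fun _ => Or.inr hp.le

theorem hasDerivAt_powPos (p : ℝ) {u : ℝ} (hu : u ≠ 0) :
    HasDerivAt (powPos p) (p * powPos (p - 1) u) u := by
  rcases hu.lt_or_gt with h | h
  · rw [powPos_of_nonpos h.le, mul_zero]
    refine (hasDerivAt_const u (0 : ℝ)).congr_of_eventuallyEq ?_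
    filter_upwards [Iio_mem_nhds h] with v hv using powPos_of_nonpos (le_of_lt hv)
  · rw [powPos_of_pos h]
    refine (Real.hasDerivAt_rpow_const (Or.inl h.ne')).congr_of_eventuallyEq ?_
    filter_upwards [Ioi_mem_nhds h] with v hv using powPos_of_pos hv

theorem powPos_mul_self (p u : ℝ) : powPos p u * u = powPos (p + 1) u := by
  unfold powPos; split_ifs with h
  · rw [rpow_add h, rpow_one]
  · simp

theorem powPos_le {p u R : ℝ} (hp : 0 ≤ p) (hR : 0 ≤ R) (hu : u ≤ R) : powPos p u ≤ R ^ p := by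
  rcases lt_or_ge 0 u with h | h
  · rw [powPos_of_pos h]; exact rpow_le_rpow h.le hu hp
  · rw [powPos_of_nonpos h]; positivity

/-- Smooth amplitudes `Φ(s, a, τ)` supported in `|τ| ≤ 1` for the relevant values of `s`. -/
structure IsAmplitude (Φ : ℝ × ℝ × ℝ → ℝ) : Prop where
  smooth : ContDiff ℝ (⊤ : ℕ∞) Φ
  vanish : ∀ s a τ : ℝ, |s| ≤ 1 / 10 → 1 < |τ| → Φ (s, a, τ) = 0

/-- The derivative in the last variable. -/
def tauDeriv (Φ : ℝ × ℝ × ℝ → ℝ) (z : ℝ × ℝ × ℝ) : ℝ := fderiv ℝ Φ z (0, 0, 1)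

/-- The amplitude produced by differentiating `(τ² - a)₊ ^ p Φ` in `τ`. -/
def lowered (p : ℝ) (Φ : ℝ × ℝ × ℝ → ℝ) (z : ℝ × ℝ × ℝ) : ℝ :=
  2 * p * z.2.2 * Φ z + (z.2.2 ^ 2 - z.2.1) * tauDeriv Φ z

/-- The oscillatory integral with amplitude `(τ² - a)₊ ^ p Φ(s, a, τ)`. -/
def oscInt (p : ℝ) (Φ : ℝ × ℝ × ℝ → ℝ) (s a t θ : ℝ) : ℝ :=
  ∫ τ, powPos p (τ ^ 2 - a) * Φ (s, a, τ) * cos (t * τ + θ)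

namespace IsAmplitude

variable {Φ : ℝ × ℝ × ℝ → ℝ}

theorem hasDerivAt (hΦ : IsAmplitude Φ) (s a τ : ℝ) :
    HasDerivAt (fun τ => Φ (s, a, τ)) (tauDeriv Φ (s, a, τ)) τ := by
  have h1 : HasFDerivAt Φ (fderiv ℝ Φ (s, a, τ)) (s, a, τ) :=
    (hΦ.smooth.differentiable (by simp)).differentiableAt.hasFDerivAt
  have h2 : HasDerivAt (fun τ : ℝ => (s, a, τ)) (0, 0, 1) τ :=
    (hasDerivAt_const τ s).prodMk ((hasDerivAt_const τ a).prodMk (hasDerivAt_id τ))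
  exact h1.comp_hasDerivAt τ h2

protected theorem tauDeriv (hΦ : IsAmplitude Φ) : IsAmplitude (tauDeriv Φ) where
  smooth := (hΦ.smooth.fderiv_right (m := (⊤ : ℕ∞)) (by simp)).clm_apply contDiff_const
  vanish s a τ hs hτ := by
    refine (hΦ.hasDerivAt s a τ).unique ((hasDerivAt_const τ (0 : ℝ)).congr_of_eventuallyEq ?_)
    filter_upwards [(isOpen_lt continuous_const continuous_abs).mem_nhds hτ] with σ hσ
    exact hΦ.vanish s a σ hs hσ

protected theorem lowered (hΦ : IsAmplitude Φ) (p : ℝ) : IsAmplitude (lowered p Φ) where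
  smooth := by
    have h1 := hΦ.smooth
    have h2 := hΦ.tauDeriv.smooth
    unfold lowered
    fun_prop
  vanish s a τ hs hτ := by
    simp [lowered, hΦ.vanish s a τ hs hτ, hΦ.tauDeriv.vanish s a τ hs hτ]

protected theorem reflect (hΦ : IsAmplitude Φ) :
    IsAmplitude fun z => Φ (z.1, z.2.1, -z.2.2) where
  smooth := by
    have h1 := hΦ.smooth
    fun_prop
  vanish s a τ hs hτ := hΦ.vanish s a _ hs (by simpa using hτ)

theorem exists_bound (hΦ : IsAmplitude Φ) :
    ∃ M : ℝ, 0 ≤ M ∧ ∀ s a τ : ℝ, |s| ≤ 1 / 10 → |a| ≤ 5 → |Φ (s, a, τ)| ≤ M := by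
  have hc : IsCompact (Set.Icc (-(1 / 10) : ℝ) (1 / 10) ×ˢ
      (Set.Icc (-5 : ℝ) 5 ×ˢ Set.Icc (-1 : ℝ) 1)) :=
    isCompact_Icc.prod (isCompact_Icc.prod isCompact_Icc)
  obtain ⟨M, hM⟩ := hc.exists_bound_of_continuousOn hΦ.smooth.continuous.continuousOn
  refine ⟨max M 0, le_max_right _ _, fun s a τ hs ha => ?_⟩
  rcases le_or_gt |τ| 1 with hτ | hτ
  · exact (hM (s, a, τ) ⟨abs_le.1 hs, abs_le.1 ha, abs_le.1 hτ⟩).trans (le_max_left _ _)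
  · rw [hΦ.vanish s a τ hs hτ, abs_zero]; exact le_max_right _ _

theorem continuous_slice (hΦ : IsAmplitude Φ) (s a : ℝ) : Continuous fun τ => Φ (s, a, τ) :=
  hΦ.smooth.continuous.comp (by fun_prop)

end IsAmplitude

theorem support_subset_Ioc_of_vanish {f : ℝ → ℝ} (hf : ∀ τ, 1 < |τ| → f τ = 0) :
    Function.support f ⊆ Set.Ioc (-2) 2 := by
  intro τ hτ
  have : |τ| ≤ 1 := not_lt.1 fun h => hτ (hf τ h)
  constructor <;> linarith [(abs_le.1 this).1, (abs_le.1 this).2]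

/-- Integration by parts in `oscInt`, trading a power of `τ² - a` for a factor `t⁻¹`. -/
theorem oscInt_eq_of_pos {Φ : ℝ × ℝ × ℝ → ℝ} (hΦ : IsAmplitude Φ) {p : ℝ} (hp : 0 < p)
    {s a : ℝ} (hs : |s| ≤ 1 / 10) {t : ℝ} (ht : 0 < t) (θ : ℝ)
    (hint : Integrable fun τ => powPos (p - 1) (τ ^ 2 - a) * lowered p Φ (s, a, τ)) :
    oscInt p Φ s a t θ = -t⁻¹ * oscInt (p - 1) (lowered p Φ) s a t (θ - π / 2) := by
  have hΦ1 := hΦ.lowered p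
  let F : ℝ → ℝ := fun τ => powPos p (τ ^ 2 - a) * Φ (s, a, τ)
  let G : ℝ → ℝ := fun τ => powPos (p - 1) (τ ^ 2 - a) * lowered p Φ (s, a, τ)
  have hFc : Continuous F :=
    ((continuous_powPos hp).comp (by fun_prop)).mul (hΦ.continuous_slice s a)
  have hF0 : ∀ τ, 1 < |τ| → F τ = 0 := fun τ hτ => by simp [F, hΦ.vanish s a τ hs hτ]
  have hG0 : ∀ τ, 1 < |τ| → G τ = 0 := fun τ hτ => by simp [G, hΦ1.vanish s a τ hs hτ]
  have hFd : ∀ τ, τ ^ 2 - a ≠ 0 → HasDerivAt F (G τ) τ := by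
    intro τ hτ
    have h1 : HasDerivAt (fun τ : ℝ => τ ^ 2 - a) (2 * τ) τ := by
      simpa using (hasDerivAt_pow 2 τ).sub_const a
    have h2 := ((hasDerivAt_powPos p hτ).comp τ h1).mul (hΦ.hasDerivAt s a τ)
    refine h2.congr_deriv ?_
    have h3 : powPos p (τ ^ 2 - a) = powPos (p - 1) (τ ^ 2 - a) * (τ ^ 2 - a) := by
      rw [powPos_mul_self, sub_add_cancel]
    simp only [G, lowered, Function.comp, h3]
    ring
  have hsin : ∀ τ, HasDerivAt (fun τ => sin (t * τ + θ)) (t * cos (t * τ + θ)) τ := by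
    intro τ
    have := (((hasDerivAt_id τ).const_mul t).add_const θ).sin
    refine this.congr_deriv ?_
    simp; ring
  have hGs : Integrable fun τ => G τ * sin (t * τ + θ) :=
    hint.mul_bdd (c := 1) (by fun_prop) (ae_of_all _ fun τ => by
      simpa using abs_sin_le_one (t * τ + θ))
  have hFi : Integrable F := hFc.integrable_of_hasCompactSupport
    (HasCompactSupport.of_support_subset_isCompact (K := Set.Icc (-2) 2) isCompact_Icc
      ((support_subset_Ioc_of_vanish hF0).trans Set.Ioc_subset_Icc_self))
  have hFs : Integrable fun τ => F τ * cos (t * τ + θ) :=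
    hFi.mul_bdd (c := 1) (by fun_prop) (ae_of_all _ fun τ => by
      simpa using abs_cos_le_one (t * τ + θ))
  have hcount : {τ : ℝ | τ ^ 2 - a = 0}.Countable := by
    refine Set.Countable.mono (s₂ := {√a, -√a}) ?_ (by simp)
    intro τ hτ
    have h : τ ^ 2 = a := by simpa [sub_eq_zero] using hτ
    have h2 : τ ^ 2 = √a ^ 2 := by rw [Real.sq_sqrt (h ▸ sq_nonneg τ), h]
    simpa using sq_eq_sq_iff_eq_or_eq_neg.1 h2
  have key := integral_eq_of_hasDerivAt_off_countable_of_le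
    (fun τ => F τ * sin (t * τ + θ)) (fun τ => G τ * sin (t * τ + θ) + t * (F τ * cos (t * τ + θ)))
    (a := -2) (b := 2) (by norm_num) hcount
    (hFc.mul (by fun_prop)).continuousOn
    (fun τ hτ => ((hFd τ hτ.2).mul (hsin τ)).congr_deriv (by ring))
    ((hGs.add (hFs.const_mul t)).intervalIntegrable)
  rw [hF0 2 (by norm_num), hF0 (-2) (by norm_num),
    intervalIntegral.integral_eq_integral_of_support_subset
      (support_subset_Ioc_of_vanish fun τ hτ => by simp [hF0 τ hτ, hG0 τ hτ]),
    integral_add hGs (hFs.const_mul t), integral_const_mul] at key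
  have h1 : oscInt p Φ s a t θ = ∫ τ, F τ * cos (t * τ + θ) := rfl
  have h2 : oscInt (p - 1) (lowered p Φ) s a t (θ - π / 2) = ∫ τ, G τ * sin (t * τ + θ) := by
    unfold oscInt
    congr 1; ext τ
    rw [← add_sub_assoc, cos_sub_pi_div_two]
  rw [h1, h2]
  field_simp
  linarith

theorem integrable_powPos_mul {Φ : ℝ × ℝ × ℝ → ℝ} (hΦ : IsAmplitude Φ) {p : ℝ} (hp : 0 ≤ p)
    {s a : ℝ} (hs : |s| ≤ 1 / 10) :
    Integrable fun τ => powPos p (τ ^ 2 - a) * Φ (s, a, τ) := by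
  have hi : Integrable fun τ => Φ (s, a, τ) :=
    (hΦ.continuous_slice s a).integrable_of_hasCompactSupport
      (HasCompactSupport.of_support_subset_isCompact (K := Set.Icc (-2) 2) isCompact_Icc
        ((support_subset_Ioc_of_vanish fun τ => hΦ.vanish s a τ hs).trans
          Set.Ioc_subset_Icc_self))
  have hm : Measurable fun τ : ℝ => powPos p (τ ^ 2 - a) :=
    (measurable_powPos p).comp (by fun_prop)
  refine (hi.norm.const_mul ((1 + |a|) ^ p)).mono' (hm.aestronglyMeasurable.mul hi.1)
    (ae_of_all _ fun τ => ?_)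
  rcases le_or_gt |τ| 1 with hτ | hτ
  · rw [norm_mul]
    refine mul_le_mul_of_nonneg_right ?_ (norm_nonneg _)
    rw [Real.norm_of_nonneg (powPos_nonneg _ _)]
    refine powPos_le hp (by positivity) ?_
    have : τ ^ 2 ≤ 1 := (sq_le_one_iff_abs_le_one τ).2 hτ
    linarith [neg_abs_le a]
  · simp [hΦ.vanish s a τ hs hτ]

/-- Decay of order `t ^ (-(p + 1))`, uniformly in `s`, `a` and the phase shift. -/
def OscDecay (p : ℝ) : Prop :=
  ∀ Φ : ℝ × ℝ × ℝ → ℝ, IsAmplitude Φ → ∃ C : ℝ, ∀ s a t θ : ℝ, |s| ≤ 1 / 10 → |a| ≤ 5 → 1 ≤ t →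
    |oscInt p Φ s a t θ| ≤ C * t ^ (-(p + 1))

theorem OscDecay.add_one {p : ℝ} (hp : 0 ≤ p) (h : OscDecay p) : OscDecay (p + 1) := by
  intro Φ hΦ
  obtain ⟨C, hC⟩ := h _ (hΦ.lowered (p + 1))
  refine ⟨C, fun s a t θ hs ha ht => ?_⟩
  have ht0 : 0 < t := by linarith
  have hint := integrable_powPos_mul (hΦ.lowered (p + 1)) hp (a := a) hs
  rw [oscInt_eq_of_pos hΦ (by linarith) hs ht0 θ (by simpa using hint), abs_mul, abs_neg,
    abs_of_pos (inv_pos.2 ht0), add_sub_cancel_right]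
  calc t⁻¹ * |oscInt p (lowered (p + 1) Φ) s a t (θ - π / 2)|
      ≤ t⁻¹ * (C * t ^ (-(p + 1))) :=
        mul_le_mul_of_nonneg_left (hC s a t _ hs ha ht) (inv_pos.2 ht0).le
    _ = C * t ^ (-(p + 1 + 1)) := by
        rw [neg_add (p + 1) 1, rpow_add ht0, rpow_neg_one]; ring

theorem sqrt_add_sq_sub_ge (a : ℝ) {y : ℝ} (hy : 0 < y) :
    y * (√a + y) ≤ (√a + y) ^ 2 - a := by
  have h := Real.sqrt_nonneg a
  rcases le_or_gt 0 a with ha | ha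
  · nlinarith [Real.sq_sqrt ha]
  · rw [Real.sqrt_eq_zero_of_nonpos ha.le]; nlinarith

theorem indicator_powPos_shift (p a : ℝ) {h : ℝ → ℝ} (hh : ∀ τ, 1 < |τ| → h τ = 0) (y : ℝ) :
    (Set.Ioi 0).indicator (fun τ => powPos p (τ ^ 2 - a) * h τ) (√a + y) =
      (Set.Ioc 0 2).indicator (fun y => ((√a + y) ^ 2 - a) ^ p * h (√a + y)) y := by
  have hb := Real.sqrt_nonneg a
  rcases le_or_gt y 0 with hy | hy
  · rw [Set.indicator_of_notMem (s := Set.Ioc 0 2) (fun h => h.1.not_ge hy)]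
    refine Set.indicator_apply_eq_zero.2 fun hpos => ?_
    have hpos : 0 < √a + y := hpos
    have ha : 0 < a := Real.sqrt_pos.1 (by linarith)
    rw [powPos_of_nonpos, zero_mul]
    nlinarith [Real.sq_sqrt ha.le]
  · rw [Set.indicator_of_mem (show √a + y ∈ Set.Ioi 0 from by
      simp only [Set.mem_Ioi]; linarith)]
    rw [powPos_of_pos (lt_of_lt_of_le (by positivity) (sqrt_add_sq_sub_ge a hy))]
    rcases le_or_gt y 2 with h2 | h2
    · rw [Set.indicator_of_mem (show y ∈ Set.Ioc 0 2 from ⟨hy, h2⟩)]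
    · rw [Set.indicator_of_notMem (s := Set.Ioc 0 2) (fun h => h.2.not_gt h2),
        hh _ (by rw [abs_of_pos (by linarith)]; linarith), mul_zero]

theorem setIntegral_Ioi_powPos (p a : ℝ) {h : ℝ → ℝ} (hh : ∀ τ, 1 < |τ| → h τ = 0) :
    ∫ τ in Set.Ioi 0, powPos p (τ ^ 2 - a) * h τ =
      ∫ y in (0 : ℝ)..2, ((√a + y) ^ 2 - a) ^ p * h (√a + y) := by
  rw [← integral_indicator measurableSet_Ioi, ← integral_add_left_eq_self _ (√a),
    intervalIntegral.integral_of_le (by norm_num), ← integral_indicator measurableSet_Ioc]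
  exact integral_congr_ae (ae_of_all _ (indicator_powPos_shift p a hh))

theorem integrableOn_Ioi_powPos (p a : ℝ) {h : ℝ → ℝ} (hh : ∀ τ, 1 < |τ| → h τ = 0)
    (hi : IntervalIntegrable (fun y => ((√a + y) ^ 2 - a) ^ p * h (√a + y)) volume 0 2) :
    IntegrableOn (fun τ => powPos p (τ ^ 2 - a) * h τ) (Set.Ioi 0) := by
  rw [← integrable_indicator_iff measurableSet_Ioi]
  rw [intervalIntegrable_iff_integrableOn_Ioc_of_le (by norm_num),
    ← integrable_indicator_iff measurableSet_Ioc,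
    ← funext (indicator_powPos_shift p a hh)] at hi
  simpa using hi.comp_add_left (-√a)

theorem abs_oscInt_le_of_half {Φ : ℝ × ℝ × ℝ → ℝ} (hΦ : IsAmplitude Φ) {p s a t θ B : ℝ}
    (hs : |s| ≤ 1 / 10)
    (hint : Integrable fun τ => powPos p (τ ^ 2 - a) * Φ (s, a, τ))
    (h1 : ∀ θ, |∫ y in (0 : ℝ)..2, ((√a + y) ^ 2 - a) ^ p * Φ (s, a, √a + y) *
      cos (t * y + θ)| ≤ B)
    (h2 : ∀ θ, |∫ y in (0 : ℝ)..2, ((√a + y) ^ 2 - a) ^ p * Φ (s, a, -(√a + y)) *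
      cos (t * y + θ)| ≤ B) :
    |oscInt p Φ s a t θ| ≤ B + B := by
  have hI : Integrable fun τ => powPos p (τ ^ 2 - a) * Φ (s, a, τ) * cos (t * τ + θ) :=
    hint.mul_bdd (c := 1) (by fun_prop) (ae_of_all _ fun τ => by
      simpa using abs_cos_le_one (t * τ + θ))
  have hneg : ∫ τ in Set.Iic 0, powPos p (τ ^ 2 - a) * Φ (s, a, τ) * cos (t * τ + θ) =
      ∫ τ in Set.Ioi 0, powPos p (τ ^ 2 - a) * (Φ (s, a, -τ) * cos (t * τ + -θ)) := by
    rw [← neg_zero, ← integral_comp_neg_Iic, neg_zero]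
    refine setIntegral_congr_fun measurableSet_Iic fun τ _ => ?_
    simp only [neg_sq, neg_neg, mul_assoc]
    rw [← cos_neg]; congr 3; ring
  have hpos : ∫ τ in Set.Ioi 0, powPos p (τ ^ 2 - a) * Φ (s, a, τ) * cos (t * τ + θ) =
      ∫ τ in Set.Ioi 0, powPos p (τ ^ 2 - a) * (Φ (s, a, τ) * cos (t * τ + θ)) := by
    simp only [mul_assoc]
  unfold oscInt
  rw [← intervalIntegral.integral_Iic_add_Ioi (b := 0) hI.integrableOn hI.integrableOn, hneg, hpos,
    setIntegral_Ioi_powPos p a fun τ hτ => by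
      rw [hΦ.vanish s a (-τ) hs (by rwa [abs_neg]), zero_mul],
    setIntegral_Ioi_powPos p a fun τ hτ => by rw [hΦ.vanish s a τ hs hτ, zero_mul]]
  refine (abs_add_le _ _).trans (add_le_add ?_ ?_)
  · refine le_of_eq_of_le (congrArg abs (intervalIntegral.integral_congr fun y _ => ?_))
      (h2 (t * √a - θ))
    simp only [mul_assoc]
    congr 3; ring
  · refine le_of_eq_of_le (congrArg abs (intervalIntegral.integral_congr fun y _ => ?_))
      (h1 (t * √a + θ))
    simp only [mul_assoc]
    congr 3; ring

theorem integral_mul_cos_eq {f f' : ℝ → ℝ} {u v t : ℝ} (huv : u ≤ v) (ht : 0 < t) (θ : ℝ)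
    (hf : ∀ y ∈ Set.Icc u v, HasDerivAt f (f' y) y) (hf' : ContinuousOn f' (Set.Icc u v)) :
    ∫ y in u..v, f y * cos (t * y + θ) =
      t⁻¹ * (f v * sin (t * v + θ) - f u * sin (t * u + θ) -
        ∫ y in u..v, f' y * sin (t * y + θ)) := by
  have hsin : ∀ y, HasDerivAt (fun y => sin (t * y + θ)) (t * cos (t * y + θ)) y := by
    intro y
    have := (((hasDerivAt_id y).const_mul t).add_const θ).sin
    refine this.congr_deriv ?_
    simp; ring
  rw [← Set.uIcc_of_le huv] at hf hf'
  have h := intervalIntegral.integral_mul_deriv_eq_deriv_mul (u := f) hf (fun y _ => hsin y)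
    hf'.intervalIntegrable (Continuous.intervalIntegrable (by fun_prop) _ _)
  rw [← h]
  simp_rw [mul_left_comm (f _) t, intervalIntegral.integral_const_mul]
  field_simp

theorem abs_integral_mul_cos_le {f f' : ℝ → ℝ} {M t : ℝ} (ht : 0 < t) (θ : ℝ)
    (hf : ∀ y ∈ Set.Icc (0 : ℝ) 2, HasDerivAt f (f' y) y) (hf' : ContinuousOn f' (Set.Icc 0 2))
    (hM : ∀ y ∈ Set.Icc (0 : ℝ) 2, |f y| ≤ M) (hM' : ∀ y ∈ Set.Icc (0 : ℝ) 2, |f' y| ≤ M) :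
    |∫ y in (0 : ℝ)..2, f y * cos (t * y + θ)| ≤ 4 * M * t⁻¹ := by
  rw [integral_mul_cos_eq (by norm_num) ht θ hf hf', abs_mul, abs_of_pos (inv_pos.2 ht), mul_comm]
  refine mul_le_mul_of_nonneg_right ?_ (inv_pos.2 ht).le
  have hb : ∀ {r R : ℝ} (x : ℝ), |r| ≤ R → |r * sin x| ≤ R := fun x hr => by
    rw [abs_mul]
    exact (mul_le_of_le_one_right (abs_nonneg _) (abs_sin_le_one x)).trans hr
  have h1 := hb (t * 2 + θ) (hM 2 (by norm_num))
  have h2 := hb (t * 0 + θ) (hM 0 (by norm_num))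
  have h3 : ‖∫ y in (0 : ℝ)..2, f' y * sin (t * y + θ)‖ ≤ M * |(2 : ℝ) - 0| :=
    intervalIntegral.norm_integral_le_of_norm_le_const fun y hy => by
      rw [Set.uIoc_of_le (by norm_num)] at hy
      exact hb _ (hM' y ⟨hy.1.le, hy.2⟩)
  rw [Real.norm_eq_abs] at h3
  norm_num at h3
  rw [abs_le] at *
  constructor <;> linarith [h1.1, h1.2, h2.1, h2.2, h3.1, h3.2]

theorem intervalIntegrable_of_le_rpow {f : ℝ → ℝ} {M : ℝ} (hf : Measurable f)
    (hM : ∀ y ∈ Set.Ioc (0 : ℝ) 2, |f y| ≤ M * y ^ (-1 / 2 : ℝ)) :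
    IntervalIntegrable f volume 0 2 := by
  have h : IntervalIntegrable (fun y : ℝ => M * y ^ (-1 / 2 : ℝ)) volume 0 2 :=
    (intervalIntegral.intervalIntegrable_rpow' (by norm_num)).const_mul M
  refine h.mono_fun' hf.aestronglyMeasurable ?_
  rw [Set.uIoc_of_le (by norm_num)]
  exact (ae_restrict_mem measurableSet_Ioc).mono hM

/-- An oscillatory integral whose amplitude has an inverse square root singularity. -/
theorem abs_integral_mul_cos_le_of_singular {f f' : ℝ → ℝ} {M t : ℝ} (ht : 1 ≤ t) (θ : ℝ)
    (hfm : Measurable f)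
    (hf : ∀ y ∈ Set.Ioc (0 : ℝ) 2, HasDerivAt f (f' y) y) (hf' : ContinuousOn f' (Set.Ioc 0 2))
    (hM : ∀ y ∈ Set.Ioc (0 : ℝ) 2, |f y| ≤ M * y ^ (-1 / 2 : ℝ))
    (hM' : ∀ y ∈ Set.Ioc (0 : ℝ) 2, |f' y| ≤ M * y ^ (-3 / 2 : ℝ)) :
    |∫ y in (0 : ℝ)..2, f y * cos (t * y + θ)| ≤ 6 * M * t ^ (-1 / 2 : ℝ) := by
  have ht0 : 0 < t := by linarith
  set δ := t⁻¹ with hδ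
  have hδ0 : 0 < δ := inv_pos.2 ht0
  have hδ1 : δ ≤ 1 := inv_le_one_of_one_le₀ ht
  have hM0 : 0 ≤ M := by
    have := (abs_nonneg _).trans (hM 1 (by norm_num))
    simpa using this
  have hsub : Set.Icc δ 2 ⊆ Set.Ioc 0 2 := fun y hy => ⟨hδ0.trans_le hy.1, hy.2⟩
  have hint : IntervalIntegrable (fun y => f y * cos (t * y + θ)) volume 0 2 :=
    intervalIntegrable_of_le_rpow (hfm.mul (by fun_prop)) fun y hy => by
      rw [abs_mul]
      exact (mul_le_of_le_one_right (abs_nonneg _) (abs_cos_le_one _)).trans (hM y hy)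
  have hδmem : δ ∈ Set.uIcc (0 : ℝ) 2 := by
    rw [Set.uIcc_of_le (by norm_num)]; exact ⟨hδ0.le, by linarith⟩
  have hi1 : IntervalIntegrable (fun y => f y * cos (t * y + θ)) volume 0 δ :=
    hint.mono_set (Set.uIcc_subset_uIcc_left hδmem)
  have hi2 : IntervalIntegrable (fun y => f y * cos (t * y + θ)) volume δ 2 :=
    hint.mono_set (Set.uIcc_subset_uIcc_right hδmem)
  have hb : ∀ {r R : ℝ} (x : ℝ), |r| ≤ R → |r * sin x| ≤ R := fun x hr => by
    rw [abs_mul]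
    exact (mul_le_of_le_one_right (abs_nonneg _) (abs_sin_le_one x)).trans hr
  have hδt : δ ^ (1 / 2 : ℝ) = t ^ (-1 / 2 : ℝ) := by
    rw [hδ, inv_rpow ht0.le, ← rpow_neg ht0.le]; norm_num
  have hδt' : δ ^ (-1 / 2 : ℝ) * t⁻¹ = t ^ (-1 / 2 : ℝ) := by
    rw [← hδ, ← hδt]
    nth_rewrite 2 [← rpow_one δ]
    rw [← rpow_add hδ0]; norm_num
  have hδge : 1 ≤ δ ^ (-1 / 2 : ℝ) :=
    one_le_rpow_of_pos_of_le_one_of_nonpos hδ0 hδ1 (by norm_num)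
  have hnear : |∫ y in (0 : ℝ)..δ, f y * cos (t * y + θ)| ≤ 2 * M * t ^ (-1 / 2 : ℝ) := by
    have h := intervalIntegral.norm_integral_le_of_norm_le (μ := volume) hδ0.le
      (f := fun y => f y * cos (t * y + θ)) (g := fun y => M * y ^ (-1 / 2 : ℝ))
      (ae_of_all _ fun y hy => by
        rw [norm_mul]
        exact (mul_le_of_le_one_right (norm_nonneg _) (abs_cos_le_one _)).trans
          (hM y ⟨hy.1, by linarith [hy.2]⟩))
      ((intervalIntegral.intervalIntegrable_rpow' (by norm_num)).const_mul M)
    rw [intervalIntegral.integral_const_mul, integral_rpow (Or.inl (by norm_num))] at h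
    norm_num at h
    norm_num at hδt
    norm_num
    rw [hδt] at h
    linarith
  have hfar : |∫ y in δ..2, f y * cos (t * y + θ)| ≤ 4 * M * t ^ (-1 / 2 : ℝ) := by
    rw [integral_mul_cos_eq (by linarith) ht0 θ (fun y hy => hf y (hsub hy)) (hf'.mono hsub),
      abs_mul, abs_of_pos (inv_pos.2 ht0), mul_comm, ← hδt', ← mul_assoc]
    refine mul_le_mul_of_nonneg_right ?_ (inv_pos.2 ht0).le
    have h1 : |f 2 * sin (t * 2 + θ)| ≤ M * δ ^ (-1 / 2 : ℝ) := by
      refine hb _ ((hM 2 (by norm_num)).trans (mul_le_mul_of_nonneg_left ?_ hM0))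
      exact (rpow_le_one_of_one_le_of_nonpos (by norm_num) (by norm_num)).trans hδge
    have h2 := hb (t * δ + θ) (hM δ ⟨hδ0, by linarith⟩)
    have h3 := intervalIntegral.norm_integral_le_of_norm_le (μ := volume)
      (show δ ≤ 2 by linarith)
      (f := fun y => f' y * sin (t * y + θ)) (g := fun y => M * y ^ (-3 / 2 : ℝ))
      (ae_of_all _ fun y hy => hb _ (hM' y ⟨hδ0.trans hy.1, hy.2⟩))
      (by
        refine ContinuousOn.intervalIntegrable fun y hy => ?_
        rw [Set.uIcc_of_le (by linarith)] at hy
        exact ((continuousAt_id.rpow_const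
          (Or.inl (hδ0.trans_le hy.1).ne')).const_mul M).continuousWithinAt)
    rw [intervalIntegral.integral_const_mul, integral_rpow (Or.inr ⟨by norm_num, by
      rw [Set.uIcc_of_le (by linarith)]; exact fun h => h.1.not_gt hδ0⟩), Real.norm_eq_abs,
      show (-3 / 2 + 1 : ℝ) = -1 / 2 by norm_num] at h3
    have h4 : M * ((2 ^ (-1 / 2 : ℝ) - δ ^ (-1 / 2 : ℝ)) / (-1 / 2)) ≤
        2 * (M * δ ^ (-1 / 2 : ℝ)) := by
      have : 0 ≤ M * (2 : ℝ) ^ (-1 / 2 : ℝ) := by positivity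
      linarith
    rw [abs_le] at *
    constructor <;> linarith [h1.1, h1.2, h2.1, h2.2, h3.1, h3.2]
  rw [← intervalIntegral.integral_add_adjacent_intervals hi1 hi2]
  exact (abs_add_le _ _).trans (by linarith)

theorem sqrt_le_three {a : ℝ} (ha : |a| ≤ 5) : √a ≤ 3 :=
  Real.sqrt_le_iff.2 ⟨by norm_num, by linarith [(abs_le.1 ha).2]⟩

theorem oscDecay_zero : OscDecay 0 := by
  have key : ∀ Φ : ℝ × ℝ × ℝ → ℝ, IsAmplitude Φ → ∃ C : ℝ, ∀ s a t : ℝ, |s| ≤ 1 / 10 → |a| ≤ 5 →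
      1 ≤ t → ∀ θ, |∫ y in (0 : ℝ)..2, ((√a + y) ^ 2 - a) ^ (0 : ℝ) * Φ (s, a, √a + y) *
        cos (t * y + θ)| ≤ C * t⁻¹ := by
    intro Φ hΦ
    obtain ⟨M, hM0, hM⟩ := hΦ.exists_bound
    obtain ⟨M', hM0', hM'⟩ := hΦ.tauDeriv.exists_bound
    refine ⟨4 * max M M', fun s a t hs ha ht θ => ?_⟩
    simp only [rpow_zero, one_mul]
    exact abs_integral_mul_cos_le (f' := fun y => tauDeriv Φ (s, a, √a + y)) (by linarith) θ
      (fun y _ => (hΦ.hasDerivAt s a (√a + y)).comp_const_add (√a) y)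
      ((hΦ.tauDeriv.continuous_slice s a).comp (by fun_prop)).continuousOn
      (fun y _ => (hM s a _ hs ha).trans (le_max_left _ _))
      (fun y _ => (hM' s a _ hs ha).trans (le_max_right _ _))
  intro Φ hΦ
  obtain ⟨C, hC⟩ := key Φ hΦ
  obtain ⟨C', hC'⟩ := key _ hΦ.reflect
  refine ⟨max C C' + max C C', fun s a t θ hs ha ht => ?_⟩
  have ht0 : 0 ≤ t⁻¹ := by positivity
  rw [zero_add, rpow_neg_one, add_mul]
  refine abs_oscInt_le_of_half hΦ hs (integrable_powPos_mul hΦ le_rfl hs) (fun θ => ?_) fun θ => ?_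
  · exact (hC s a t hs ha ht θ).trans (mul_le_mul_of_nonneg_right (le_max_left _ _) ht0)
  · exact (hC' s a t hs ha ht θ).trans (mul_le_mul_of_nonneg_right (le_max_right _ _) ht0)

/-- Bounds for `(τ² - a) ^ (-1/2) φ` and its derivative, where `τ = √a + y`, in terms of
`r = √(τ² - a)`, `u = √τ` and `w = √y`. -/
theorem singular_amplitude_bounds {r u w M φ φ' : ℝ} (hu0 : 0 < u) (hw0 : 0 < w)
    (hw : w ≤ 2) (hu : u ≤ 3) (hr : r ≤ 6) (hwu : w ≤ u) (hrw : w * u ≤ r) (hM : 0 ≤ M)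
    (hφ : |φ| ≤ M * (u ^ 2 + r ^ 2)) (hφ' : |φ'| ≤ M) :
    |r⁻¹ * φ| ≤ 20 * M * w⁻¹ ∧
      |-(u ^ 2 * (r ^ 3)⁻¹) * φ + r⁻¹ * φ'| ≤ 20 * M * (w ^ 3)⁻¹ := by
  have hr0 : 0 < r := (mul_pos hw0 hu0).trans_le hrw
  have hwr : w ^ 2 ≤ r := by nlinarith
  have h1 : u ^ 2 * r⁻¹ ≤ 3 * w⁻¹ := by
    rw [← div_eq_mul_inv, ← div_eq_mul_inv, div_le_div_iff₀ hr0 hw0]; nlinarith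
  have h2 : r ≤ 12 * w⁻¹ := by
    rw [← div_eq_mul_inv, le_div_iff₀ hw0]; nlinarith
  constructor
  · rw [abs_mul, abs_of_pos (inv_pos.2 hr0)]
    calc r⁻¹ * |φ| ≤ r⁻¹ * (M * (u ^ 2 + r ^ 2)) :=
          mul_le_mul_of_nonneg_left hφ (inv_pos.2 hr0).le
      _ = M * (u ^ 2 * r⁻¹ + r) := by field_simp
      _ ≤ M * (20 * w⁻¹) := by
          refine mul_le_mul_of_nonneg_left ?_ hM
          linarith [inv_pos.2 hw0]
      _ = _ := by ring
  · have h3 : u ^ 4 * (r ^ 3)⁻¹ ≤ 3 * (w ^ 3)⁻¹ := by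
      rw [← div_eq_mul_inv, ← div_eq_mul_inv, div_le_div_iff₀ (by positivity) (by positivity)]
      have : (w * u) ^ 3 ≤ r ^ 3 := pow_le_pow_left₀ (by positivity) hrw 3
      nlinarith [pow_pos hw0 3, mul_le_mul_of_nonneg_left hu (pow_pos (mul_pos hw0 hu0) 3).le]
    have h4 : w⁻¹ ≤ 4 * (w ^ 3)⁻¹ := by
      rw [inv_eq_one_div, ← div_eq_mul_inv, div_le_div_iff₀ (by positivity) (by positivity)]
      nlinarith [mul_le_mul_of_nonneg_left (mul_self_le_mul_self hw0.le hw) hw0.le]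
    have h5 : r⁻¹ ≤ 2 * (w ^ 3)⁻¹ := by
      rw [inv_eq_one_div, ← div_eq_mul_inv, div_le_div_iff₀ (by positivity) (by positivity)]
      nlinarith [mul_le_mul_of_nonneg_left hw (sq_nonneg w)]
    refine (abs_add_le _ _).trans ?_
    rw [abs_mul, abs_mul, abs_neg, abs_of_pos (show 0 < u ^ 2 * (r ^ 3)⁻¹ by positivity),
      abs_of_pos (inv_pos.2 hr0)]
    calc u ^ 2 * (r ^ 3)⁻¹ * |φ| + r⁻¹ * |φ'|
        ≤ u ^ 2 * (r ^ 3)⁻¹ * (M * (u ^ 2 + r ^ 2)) + r⁻¹ * M := by gcongr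
      _ = M * (u ^ 4 * (r ^ 3)⁻¹ + u ^ 2 * r⁻¹ + r⁻¹) := by field_simp
      _ ≤ M * (20 * (w ^ 3)⁻¹) := by
          refine mul_le_mul_of_nonneg_left ?_ hM
          have : 0 < (w ^ 3)⁻¹ := by positivity
          linarith
      _ = _ := by ring

theorem rpow_neg_half {x : ℝ} (hx : 0 ≤ x) : x ^ (-1 / 2 : ℝ) = (√x)⁻¹ := by
  rw [Real.sqrt_eq_rpow, ← rpow_neg hx]; norm_num

theorem rpow_neg_three_halves {x : ℝ} (hx : 0 ≤ x) : x ^ (-3 / 2 : ℝ) = (√x ^ 3)⁻¹ := by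
  rw [Real.sqrt_eq_rpow, ← rpow_natCast, ← rpow_mul hx, ← rpow_neg hx]; norm_num

theorem exists_bound_singular {ψ : ℝ × ℝ × ℝ → ℝ} (hψ : IsAmplitude ψ)
    {M₀ : ℝ}
    (hψ0 : ∀ s a τ : ℝ, |s| ≤ 1 / 10 → |a| ≤ 5 → |ψ (s, a, τ)| ≤ M₀ * (|τ| + |τ ^ 2 - a|)) :
    ∃ C : ℝ, ∀ s a : ℝ, |s| ≤ 1 / 10 → |a| ≤ 5 →
      IntervalIntegrable (fun y => ((√a + y) ^ 2 - a) ^ (-1 / 2 : ℝ) * ψ (s, a, √a + y))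
        volume 0 2 ∧
      ∀ t θ : ℝ, 1 ≤ t → |∫ y in (0 : ℝ)..2, ((√a + y) ^ 2 - a) ^ (-1 / 2 : ℝ) *
        ψ (s, a, √a + y) * cos (t * y + θ)| ≤ C * t ^ (-1 / 2 : ℝ) := by
  obtain ⟨M', hM0', hM'⟩ := hψ.tauDeriv.exists_bound
  set M := max M₀ M'
  refine ⟨6 * (20 * M), fun s a hs ha => ?_⟩
  set f : ℝ → ℝ := fun y => ((√a + y) ^ 2 - a) ^ (-1 / 2 : ℝ) * ψ (s, a, √a + y)
  set f' : ℝ → ℝ := fun y => -((√a + y) * ((√a + y) ^ 2 - a) ^ (-3 / 2 : ℝ)) * ψ (s, a, √a + y) +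
    ((√a + y) ^ 2 - a) ^ (-1 / 2 : ℝ) * tauDeriv ψ (s, a, √a + y)
  have hb := Real.sqrt_nonneg a
  have hDpos : ∀ y : ℝ, 0 < y → 0 < (√a + y) ^ 2 - a := fun y hy =>
    lt_of_lt_of_le (by positivity) (sqrt_add_sq_sub_ge a hy)
  have hfm : Measurable f :=
    (Measurable.pow_const (by fun_prop) _).mul
      ((hψ.continuous_slice s a).comp (by fun_prop)).measurable
  have hf : ∀ y ∈ Set.Ioc (0 : ℝ) 2, HasDerivAt f (f' y) y := by
    intro y hy
    have h1 : HasDerivAt (fun y : ℝ => (√a + y) ^ 2 - a) (2 * (√a + y)) y := by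
      simpa using (((hasDerivAt_id y).const_add (√a)).pow 2).sub_const a
    have h2 := (h1.rpow_const (p := -1 / 2) (Or.inl (hDpos y hy.1).ne')).mul
      ((hψ.hasDerivAt s a (√a + y)).comp_const_add (√a) y)
    refine h2.congr_deriv ?_
    rw [show (-1 / 2 - 1 : ℝ) = -3 / 2 by norm_num]
    simp only [f']
    ring
  have hpow : ∀ p : ℝ, ContinuousOn (fun y : ℝ => ((√a + y) ^ 2 - a) ^ p) (Set.Ioc 0 2) :=
    fun p => ContinuousOn.rpow_const (by fun_prop) fun y hy => Or.inl (hDpos y hy.1).ne'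
  have hc1 : Continuous fun y => ψ (s, a, √a + y) :=
    (hψ.continuous_slice s a).comp (by fun_prop)
  have hc2 : Continuous fun y => tauDeriv ψ (s, a, √a + y) :=
    (hψ.tauDeriv.continuous_slice s a).comp (by fun_prop)
  have hf' : ContinuousOn f' (Set.Ioc 0 2) :=
    (((by fun_prop : ContinuousOn (fun y : ℝ => √a + y) _).mul (hpow _)).neg.mul
      hc1.continuousOn).add ((hpow _).mul hc2.continuousOn)
  have hbd : ∀ y ∈ Set.Ioc (0 : ℝ) 2, |f y| ≤ 20 * M * y ^ (-1 / 2 : ℝ) ∧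
      |f' y| ≤ 20 * M * y ^ (-3 / 2 : ℝ) := by
    intro y hy
    have hD := hDpos y hy.1
    have hτ : 0 < √a + y := by linarith [hy.1]
    have hτ5 : √a + y ≤ 5 := by linarith [sqrt_le_three ha, hy.2]
    simp only [f, f', rpow_neg_half hy.1.le, rpow_neg_three_halves hy.1.le, rpow_neg_half hD.le,
      rpow_neg_three_halves hD.le]
    have hu2 : √(√a + y) ^ 2 = √a + y := Real.sq_sqrt hτ.le
    have hr2 : √((√a + y) ^ 2 - a) ^ 2 = (√a + y) ^ 2 - a := Real.sq_sqrt hD.le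
    have := singular_amplitude_bounds (r := √((√a + y) ^ 2 - a)) (u := √(√a + y)) (w := √y)
      (M := M) (φ := ψ (s, a, √a + y)) (φ' := tauDeriv ψ (s, a, √a + y))
      (Real.sqrt_pos.2 hτ) (Real.sqrt_pos.2 hy.1)
      (Real.sqrt_le_iff.2 ⟨by norm_num, by linarith [hy.2]⟩)
      (Real.sqrt_le_iff.2 ⟨by norm_num, by linarith⟩)
      (Real.sqrt_le_iff.2 ⟨by norm_num, by nlinarith [(abs_le.1 ha).1]⟩)
      (Real.sqrt_le_sqrt (by linarith))
      (by rw [← Real.sqrt_mul hy.1.le]; exact Real.sqrt_le_sqrt (sqrt_add_sq_sub_ge a hy.1))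
      (hM0'.trans (le_max_right _ _))
      (by
        rw [hu2, hr2]
        have h := hψ0 s a (√a + y) hs ha
        rw [abs_of_pos hτ, abs_of_pos hD] at h
        exact h.trans (mul_le_mul_of_nonneg_right (le_max_left _ _) (by linarith)))
      ((hM' s a _ hs ha).trans (le_max_right _ _))
    rwa [hu2] at this
  refine ⟨intervalIntegrable_of_le_rpow hfm fun y hy => (hbd y hy).1, fun t θ ht => ?_⟩
  exact abs_integral_mul_cos_le_of_singular ht θ hfm hf hf' (fun y hy => (hbd y hy).1)
    fun y hy => (hbd y hy).2

theorem oscDecay_half : OscDecay (1 / 2) := by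
  intro Φ hΦ
  have hψ := hΦ.lowered (1 / 2)
  obtain ⟨M₁, -, hM₁⟩ := hΦ.exists_bound
  obtain ⟨M₂, -, hM₂⟩ := hΦ.tauDeriv.exists_bound
  have hb : ∀ s a τ : ℝ, |s| ≤ 1 / 10 → |a| ≤ 5 →
      |lowered (1 / 2) Φ (s, a, τ)| ≤ max M₁ M₂ * (|τ| + |τ ^ 2 - a|) := by
    intro s a τ hs ha
    simp only [lowered]
    refine (abs_add_le _ _).trans ?_
    rw [show 2 * (1 / 2) * τ = τ by ring, abs_mul, abs_mul, mul_comm |τ|, mul_comm |τ ^ 2 - a|,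
      mul_add]
    exact add_le_add
      (mul_le_mul_of_nonneg_right ((hM₁ s a τ hs ha).trans (le_max_left _ _)) (abs_nonneg _))
      (mul_le_mul_of_nonneg_right ((hM₂ s a τ hs ha).trans (le_max_right _ _)) (abs_nonneg _))
  obtain ⟨C, hC⟩ := exists_bound_singular hψ hb
  obtain ⟨C', hC'⟩ := exists_bound_singular hψ.reflect fun s a τ hs ha => by
    simpa using hb s a (-τ) hs ha
  refine ⟨max C C' + max C C', fun s a t θ hs ha ht => ?_⟩
  have ht0 : 0 < t := by linarith
  have htp : 0 ≤ t ^ (-1 / 2 : ℝ) := rpow_nonneg ht0.le _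
  have hp : (1 / 2 - 1 : ℝ) = -1 / 2 := by norm_num
  have hint : Integrable fun τ =>
      powPos (-1 / 2) (τ ^ 2 - a) * lowered (1 / 2) Φ (s, a, τ) := by
    have hpos := integrableOn_Ioi_powPos (-1 / 2) a (fun τ => hψ.vanish s a τ hs) (hC s a hs ha).1
    have hneg := integrableOn_Ioi_powPos (-1 / 2) a (fun τ => hψ.reflect.vanish s a τ hs)
      (hC' s a hs ha).1
    have hneg' : IntegrableOn (fun τ => powPos (-1 / 2) (τ ^ 2 - a) * lowered (1 / 2) Φ (s, a, τ))
        (Set.Iio 0) := by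
      rw [← neg_zero] at hneg
      simpa using hneg.comp_neg_Iio
    rw [← integrableOn_univ, ← Set.Iic_union_Ioi (a := (0 : ℝ))]
    exact ((integrableOn_Iic_iff_integrableOn_Iio enorm_ne_top).2 hneg').union hpos
  rw [oscInt_eq_of_pos hΦ (by norm_num) hs ht0 θ (by rwa [hp]), hp, abs_mul, abs_neg,
    abs_of_pos (inv_pos.2 ht0)]
  have hhalf : |oscInt (-1 / 2) (lowered (1 / 2) Φ) s a t (θ - π / 2)| ≤
      max C C' * t ^ (-1 / 2 : ℝ) + max C C' * t ^ (-1 / 2 : ℝ) :=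
    abs_oscInt_le_of_half hψ hs hint
      (fun θ => ((hC s a hs ha).2 t θ ht).trans
        (mul_le_mul_of_nonneg_right (le_max_left _ _) htp))
      (fun θ => ((hC' s a hs ha).2 t θ ht).trans
        (mul_le_mul_of_nonneg_right (le_max_right _ _) htp))
  calc _ ≤ t⁻¹ * (max C C' * t ^ (-1 / 2 : ℝ) + max C C' * t ^ (-1 / 2 : ℝ)) :=
        mul_le_mul_of_nonneg_left hhalf (inv_pos.2 ht0).le
    _ = _ := by
      rw [show (-(1 / 2 + 1) : ℝ) = -1 + -1 / 2 by norm_num, rpow_add ht0, rpow_neg_one]; ring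

theorem oscDecay_half_nat (j : ℕ) : OscDecay (j / 2) := by
  induction j using Nat.strong_induction_on with
  | _ j ih =>
    match j with
    | 0 => simpa using oscDecay_zero
    | 1 => simpa using oscDecay_half
    | j + 2 =>
      have := (ih j (by omega)).add_one (by positivity)
      push_cast
      rwa [add_div, div_self (two_ne_zero : (2 : ℝ) ≠ 0)]

/-- The uniform bound for all frequencies. -/
theorem exists_oscInt_bound (j : ℕ) {Φ : ℝ × ℝ × ℝ → ℝ} (hΦ : IsAmplitude Φ) :
    ∃ C : ℝ, 0 ≤ C ∧ ∀ s a t : ℝ, |s| ≤ 1 / 10 → |a| ≤ 5 →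
      |oscInt (j / 2) Φ s a (2 * π * t) 0| ≤ C * (1 + |t|) ^ (-((j : ℝ) / 2 + 1)) := by
  obtain ⟨C, hC⟩ := oscDecay_half_nat j Φ hΦ
  obtain ⟨M, hM0, hM⟩ := hΦ.exists_bound
  have hC0 : 0 ≤ C := by
    have := (abs_nonneg _).trans (hC 0 0 1 0 (by norm_num) (by norm_num) le_rfl)
    simpa using this
  set q : ℝ := (j : ℝ) / 2 + 1 with hq
  have hq0 : 0 ≤ q := by positivity
  set B : ℝ := 6 ^ (j / 2 : ℝ) * M * 4 with hB
  have hB0 : 0 ≤ B := by positivity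
  refine ⟨2 ^ q * (B + C), by positivity, fun s a t hs ha => ?_⟩
  have hT : 0 < 1 + |t| := by positivity
  rcases le_or_gt |t| 1 with ht | ht
  · have hbd : |oscInt (j / 2) Φ s a (2 * π * t) 0| ≤ B := by
      unfold oscInt
      rw [← intervalIntegral.integral_eq_integral_of_support_subset
        (support_subset_Ioc_of_vanish fun τ hτ => by simp [hΦ.vanish s a τ hs hτ])]
      have h4 : B = 6 ^ (j / 2 : ℝ) * M * |2 - (-2 : ℝ)| := by rw [hB]; norm_num
      rw [← Real.norm_eq_abs, h4]
      refine intervalIntegral.norm_integral_le_of_norm_le_const fun τ _ => ?_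
      rcases le_or_gt |τ| 1 with hτ | hτ
      · rw [norm_mul]
        refine (mul_le_of_le_one_right (norm_nonneg _) (abs_cos_le_one _)).trans ?_
        rw [norm_mul, Real.norm_of_nonneg (powPos_nonneg _ _)]
        refine mul_le_mul (powPos_le (by positivity) (by norm_num) ?_) (hM s a τ hs ha)
          (norm_nonneg _) (by positivity)
        linarith [(sq_le_one_iff_abs_le_one τ).2 hτ, (abs_le.1 ha).1]
      · rw [hΦ.vanish s a τ hs hτ, mul_zero, zero_mul, norm_zero]; positivity
    refine hbd.trans ?_
    have h1 : (2 : ℝ) ^ (-q) ≤ (1 + |t|) ^ (-q) :=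
      rpow_le_rpow_of_nonpos hT (by linarith) (by linarith)
    have h2 : (2 : ℝ) ^ q * 2 ^ (-q) = 1 := by
      rw [← rpow_add two_pos, add_neg_cancel, rpow_zero]
    calc B ≤ (B + C) * (2 ^ q * 2 ^ (-q)) := by rw [h2]; linarith
      _ = 2 ^ q * (B + C) * 2 ^ (-q) := by ring
      _ ≤ _ := mul_le_mul_of_nonneg_left h1 (by positivity)
  · have habs : oscInt (j / 2) Φ s a (2 * π * t) 0 = oscInt (j / 2) Φ s a (2 * π * |t|) 0 := by
      unfold oscInt
      congr 1; ext τ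
      rcases abs_choice t with h | h
      · rw [h]
      · rw [h, add_zero, add_zero, mul_neg, neg_mul, cos_neg]
    have h2t : 1 + |t| ≤ 2 * (2 * π * |t|) := by nlinarith [pi_gt_three]
    have ht1 : 1 ≤ 2 * π * |t| := by nlinarith [pi_gt_three]
    have h3 : (2 * π * |t|) ^ (-q) ≤ 2 ^ q * (1 + |t|) ^ (-q) := by
      have : (2 * π * |t|) ^ (-q) ≤ ((1 + |t|) / 2) ^ (-q) :=
        rpow_le_rpow_of_nonpos (by positivity) (by linarith) (by linarith)
      refine this.trans_eq ?_
      rw [div_rpow hT.le two_pos.le, rpow_neg two_pos.le, div_inv_eq_mul, mul_comm]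
    rw [habs]
    calc _ ≤ C * (2 * π * |t|) ^ (-q) := hC s a _ 0 hs ha ht1
      _ ≤ (B + C) * (2 ^ q * (1 + |t|) ^ (-q)) := by gcongr; linarith
      _ = _ := by ring

/-- The point `(ξ, τ)` of `ℝ^{n-1} × ℝ`. -/
def spacetimePoint {m : ℕ} (ξ : EuclideanSpace ℝ (Fin m)) (τ : ℝ) : Spacetime m :=
  WithLp.toLp 2 (Fin.snoc ξ τ)

section SpacetimePoint

variable {m : ℕ}

@[simp]
theorem timeCoord_spacetimePoint (ξ : EuclideanSpace ℝ (Fin m)) (τ : ℝ) :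
    timeCoord (spacetimePoint ξ τ) = τ := by
  simp [timeCoord, spacetimePoint]

theorem inner_spacetimePoint (ξ x : EuclideanSpace ℝ (Fin m)) (τ t : ℝ) :
    ⟪spacetimePoint ξ τ, spacetimePoint x t⟫ = ⟪ξ, x⟫ + τ * t := by
  simp [spacetimePoint, PiLp.inner_apply, Fin.sum_univ_castSucc, mul_comm]

theorem norm_spacetimePoint_sq (ξ : EuclideanSpace ℝ (Fin m)) (τ : ℝ) :
    ‖spacetimePoint ξ τ‖ ^ 2 = ‖ξ‖ ^ 2 + τ ^ 2 := by
  rw [← real_inner_self_eq_norm_sq, inner_spacetimePoint, real_inner_self_eq_norm_sq, sq τ]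

theorem spacetimePoint_sub (ξ ξ' : EuclideanSpace ℝ (Fin m)) (τ τ' : ℝ) :
    spacetimePoint ξ τ - spacetimePoint ξ' τ' = spacetimePoint (ξ - ξ') (τ - τ') := by
  ext i
  refine Fin.lastCases ?_ (fun i => ?_) i <;> simp [spacetimePoint]

theorem dist_spacetimePoint_sq (ξ ξ' : EuclideanSpace ℝ (Fin m)) (τ τ' : ℝ) :
    dist (spacetimePoint ξ τ) (spacetimePoint ξ' τ') ^ 2 = ‖ξ - ξ'‖ ^ 2 + (τ - τ') ^ 2 := by
  rw [dist_eq_norm, spacetimePoint_sub, norm_spacetimePoint_sq]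

theorem exists_spacetimePoint_eq (z : Spacetime m) :
    ∃ ξ : EuclideanSpace ℝ (Fin m), spacetimePoint ξ (timeCoord z) = z := by
  refine ⟨WithLp.toLp 2 fun i => z i.castSucc, ?_⟩
  ext i
  refine Fin.lastCases ?_ (fun i => ?_) i <;> simp [spacetimePoint, timeCoord]

theorem waveSymbol_spacetimePoint (ξ : EuclideanSpace ℝ (Fin m)) (τ : ℝ) :
    waveSymbol (spacetimePoint ξ τ) = ‖ξ‖ ^ 2 - τ ^ 2 := by
  rw [waveSymbol, norm_spacetimePoint_sq, timeCoord_spacetimePoint]; ring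

theorem continuous_spacetimePoint :
    Continuous fun p : EuclideanSpace ℝ (Fin m) × ℝ => spacetimePoint p.1 p.2 := by
  refine (PiLp.continuous_toLp 2 _).comp (continuous_pi fun i => ?_)
  refine Fin.lastCases ?_ (fun i => ?_) i
  · simpa using continuous_snd
  · simp only [Fin.snoc_castSucc]
    fun_prop

end SpacetimePoint

section Sheets

variable {m : ℕ}

/-- The height of the sheet of `|ξ|² - τ² = s` on which `τ` has the sign `ε`. -/
def sheetHeight (ε s : ℝ) (ξ : EuclideanSpace ℝ (Fin m)) : ℝ := ε * √(‖ξ‖ ^ 2 - s)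

/-- The parametrization of a sheet of `|ξ|² - τ² = s` by the space variable. -/
def sheetPoint (ε s : ℝ) (ξ : EuclideanSpace ℝ (Fin m)) : Spacetime m :=
  spacetimePoint ξ (sheetHeight ε s ξ)

/-- The set of space variables over which the sheets of `|ξ|² - τ² = s` lie. -/
def sheetBase (m : ℕ) (s : ℝ) : Set (EuclideanSpace ℝ (Fin m)) := {ξ | s < ‖ξ‖ ^ 2}

/-- The surface density of a sheet with respect to the space variable. -/
def sheetDensity (s u : ℝ) : ℝ := √((2 * u - s) / (u - s))

theorem isOpen_sheetBase (s : ℝ) : IsOpen (sheetBase m s) :=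
  isOpen_lt continuous_const (by fun_prop)

theorem measurableEmbedding_sheetPoint (ε s : ℝ) :
    MeasurableEmbedding (sheetPoint (m := m) ε s) := by
  have hc : Continuous (sheetHeight (m := m) ε s) := by unfold sheetHeight; fun_prop
  refine Continuous.measurableEmbedding ?_ fun ξ ξ' h => ?_
  · exact continuous_spacetimePoint.comp (continuous_id.prodMk hc)
  · have h0 := dist_spacetimePoint_sq ξ ξ' (sheetHeight ε s ξ) (sheetHeight ε s ξ')
    change dist (sheetPoint ε s ξ) (sheetPoint ε s ξ') ^ 2 = _ at h0
    rw [h, dist_self] at h0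
    have : ‖ξ - ξ'‖ ^ 2 = 0 := by
      nlinarith [sq_nonneg ‖ξ - ξ'‖, sq_nonneg (sheetHeight ε s ξ - sheetHeight ε s ξ')]
    simpa [sub_eq_zero] using this

theorem hasStrictFDerivAt_sheetHeight (ε : ℝ) {s : ℝ} {ξ : EuclideanSpace ℝ (Fin m)}
    (hξ : ξ ∈ sheetBase m s) :
    HasStrictFDerivAt (sheetHeight ε s) (innerSL ℝ ((ε * (√(‖ξ‖ ^ 2 - s))⁻¹) • ξ)) ξ := by
  have h0 : 0 < ‖ξ‖ ^ 2 - s := sub_pos.2 hξ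
  have h1 := ((hasStrictFDerivAt_norm_sq ξ).sub_const s).sqrt h0.ne'
  refine (h1.const_mul ε).congr_fderiv ?_
  ext v
  simp
  ring

/-- The surface measure on a sheet is the image of the density `√((2|ξ|² - s) / (|ξ|² - s))`. -/
theorem hausdorffMeasure_restrict_sheet {ε : ℝ} (hε : ε ^ 2 = 1) (s : ℝ) :
    (μH[(m : ℝ)]).restrict (sheetPoint ε s '' sheetBase m s) =
      Measure.map (sheetPoint ε s) (((μH[(m : ℝ)]).restrict (sheetBase m s)).withDensity
        fun ξ => ENNReal.ofReal (sheetDensity s (‖ξ‖ ^ 2))) := by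
  have h := graph_measure (U := sheetBase m s) (f := sheetHeight ε s) (Γ := sheetPoint ε s)
    (grad := fun ξ => (ε * (√(‖ξ‖ ^ 2 - s))⁻¹) • ξ)
    (fun ξ ξ' => dist_spacetimePoint_sq _ _ _ _) (measurableEmbedding_sheetPoint ε s)
    (isOpen_sheetBase s) (fun ξ hξ => hasStrictFDerivAt_sheetHeight ε hξ) ?_
  · rw [finrank_euclideanSpace_fin] at h
    rw [h]
    congr 1
    refine withDensity_congr_ae ?_
    filter_upwards [ae_restrict_mem (isOpen_sheetBase s).measurableSet] with ξ hξ
    have h0 : 0 < ‖ξ‖ ^ 2 - s := sub_pos.2 hξ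
    rw [norm_smul, mul_pow, norm_mul, mul_pow, norm_inv, Real.norm_eq_abs, sq_abs, hε, inv_pow,
      Real.norm_eq_abs, sq_abs, Real.sq_sqrt h0.le, sheetDensity]
    congr 2
    field_simp
    ring
  · have hc : Continuous fun ξ : EuclideanSpace ℝ (Fin m) => √(‖ξ‖ ^ 2 - s) := by fun_prop
    exact (continuousOn_const.mul (hc.continuousOn.inv₀ fun ξ hξ =>
      (Real.sqrt_pos.2 (sub_pos.2 hξ)).ne')).smul continuousOn_id

theorem hausdorffMeasure_eq_smul_volume (m : ℕ) :
    ∃ c : NNReal, (μH[(m : ℝ)] : Measure (EuclideanSpace ℝ (Fin m))) = c • volume := by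
  have h := isAddHaarMeasure_hausdorffMeasure (E := EuclideanSpace ℝ (Fin m))
  rw [finrank_euclideanSpace_fin] at h
  exact ⟨_, Measure.isAddLeftInvariant_eq_smul _ _⟩

theorem hausdorffMeasure_equator [NeZero m] (s : ℝ) :
    (μH[(m : ℝ)]) {z : Spacetime m | waveSymbol z = s ∧ timeCoord z = 0} = 0 := by
  have hiso : Isometry fun ξ : EuclideanSpace ℝ (Fin m) => spacetimePoint ξ 0 :=
    Isometry.of_dist_eq fun ξ ξ' => by
      refine (sq_eq_sq₀ dist_nonneg dist_nonneg).1 ?_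
      rw [dist_spacetimePoint_sq, dist_eq_norm]; simp
  refine measure_mono_null (t := (fun ξ => spacetimePoint ξ 0) '' Metric.sphere 0 (√s)) ?_ ?_
  · rintro z ⟨hz, hz0⟩
    obtain ⟨ξ, hξ⟩ := exists_spacetimePoint_eq z
    rw [hz0] at hξ
    refine ⟨ξ, ?_, hξ⟩
    rw [← hξ, waveSymbol_spacetimePoint] at hz
    rw [mem_sphere_zero_iff_norm, ← hz]
    simp
  · rw [hiso.hausdorffMeasure_image (Or.inl (by positivity))]
    obtain ⟨c, hc⟩ := hausdorffMeasure_eq_smul_volume m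
    rw [hc, Measure.smul_apply, Measure.addHaar_sphere, smul_zero]

theorem sheetPoint_mem_iff {ε s : ℝ} (hε : ε ^ 2 = 1) (z : Spacetime m) :
    z ∈ sheetPoint ε s '' sheetBase m s ↔ waveSymbol z = s ∧ 0 < ε * timeCoord z := by
  have hεε : ε * ε = 1 := by rw [← sq, hε]
  constructor
  · rintro ⟨ξ, hξ, rfl⟩
    have h0 : 0 < ‖ξ‖ ^ 2 - s := sub_pos.2 hξ
    rw [sheetPoint, waveSymbol_spacetimePoint, timeCoord_spacetimePoint, sheetHeight, mul_pow, hε,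
      Real.sq_sqrt h0.le, ← mul_assoc, hεε, one_mul, one_mul]
    exact ⟨by ring, Real.sqrt_pos.2 h0⟩
  · rintro ⟨h, hpos⟩
    obtain ⟨ξ, hξ⟩ := exists_spacetimePoint_eq z
    rw [← hξ, waveSymbol_spacetimePoint] at h
    have h1 : ‖ξ‖ ^ 2 - s = (ε * timeCoord z) ^ 2 := by rw [mul_pow, hε, ← h]; ring
    refine ⟨ξ, ?_, ?_⟩
    · have : 0 < ‖ξ‖ ^ 2 - s := by rw [h1]; positivity
      exact sub_pos.1 this
    · rw [sheetPoint, sheetHeight, h1, Real.sqrt_sq hpos.le, ← mul_assoc, hεε, one_mul, hξ]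

theorem levelMeasure_eq [NeZero m] (s : ℝ) :
    levelMeasure m s = (μH[(m : ℝ)]).restrict (sheetPoint 1 s '' sheetBase m s) +
      (μH[(m : ℝ)]).restrict (sheetPoint (-1) s '' sheetBase m s) := by
  have hm : ∀ ε : ℝ, MeasurableSet (sheetPoint ε s '' sheetBase m s) := fun ε =>
    (measurableEmbedding_sheetPoint ε s).measurableSet_image.2 (isOpen_sheetBase s).measurableSet
  rw [← Measure.restrict_union _ (hm _), levelMeasure]
  · refine Measure.restrict_congr_set ?_
    have h0 := measure_eq_zero_iff_ae_notMem.1 (hausdorffMeasure_equator (m := m) s)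
    filter_upwards [h0] with z hz
    refine propext ?_
    change (waveSymbol z = s ∧ z ≠ 0) ↔
      z ∈ sheetPoint 1 s '' sheetBase m s ∪ sheetPoint (-1) s '' sheetBase m s
    rw [Set.mem_union, sheetPoint_mem_iff (by norm_num), sheetPoint_mem_iff (by norm_num),
      ← and_or_left]
    refine and_congr_right fun hzs => ?_
    have ht : timeCoord z ≠ 0 := fun h => hz ⟨hzs, h⟩
    refine iff_of_true (fun h => ht (by simp [h, timeCoord])) ?_
    rcases ht.lt_or_gt with h | h
    · exact Or.inr (by linarith)
    · exact Or.inl (by linarith)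
  · refine Set.disjoint_left.2 fun z hz hz' => ?_
    rw [sheetPoint_mem_iff (by norm_num)] at hz hz'
    linarith [hz.2, hz'.2]

end Sheets

section Reduction

variable {m : ℕ}

theorem measurable_sheetDensity (s : ℝ) : Measurable (sheetDensity s) := by
  unfold sheetDensity; fun_prop

theorem sheetDensity_nonneg (s u : ℝ) : 0 ≤ sheetDensity s u := Real.sqrt_nonneg _

theorem integrableOn_sheetBase_of_sheet {ε s : ℝ} (hε : ε ^ 2 = 1) {F : Spacetime m → ℂ}
    (hF : Integrable F ((μH[(m : ℝ)]).restrict (sheetPoint ε s '' sheetBase m s))) :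
    IntegrableOn (fun ξ => (sheetDensity s (‖ξ‖ ^ 2) : ℂ) * F (sheetPoint ε s ξ))
      (sheetBase m s) μH[(m : ℝ)] := by
  have hmeas : Measurable fun ξ : EuclideanSpace ℝ (Fin m) =>
      ENNReal.ofReal (sheetDensity s (‖ξ‖ ^ 2)) :=
    ((measurable_sheetDensity s).comp (by fun_prop)).ennreal_ofReal
  rw [hausdorffMeasure_restrict_sheet hε,
    (measurableEmbedding_sheetPoint ε s).integrable_map_iff,
    integrable_withDensity_iff_integrable_smul' hmeas (by simp)] at hF
  simpa [IntegrableOn, ENNReal.toReal_ofReal (sheetDensity_nonneg _ _)] using hF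

theorem integral_sheet {ε s : ℝ} (hε : ε ^ 2 = 1) (F : Spacetime m → ℂ) :
    ∫ z in sheetPoint ε s '' sheetBase m s, F z ∂μH[(m : ℝ)] =
      ∫ ξ in sheetBase m s, (sheetDensity s (‖ξ‖ ^ 2) : ℂ) * F (sheetPoint ε s ξ) ∂μH[(m : ℝ)] := by
  have hmeas : Measurable fun ξ : EuclideanSpace ℝ (Fin m) =>
      ENNReal.ofReal (sheetDensity s (‖ξ‖ ^ 2)) :=
    ((measurable_sheetDensity s).comp (by fun_prop)).ennreal_ofReal
  rw [hausdorffMeasure_restrict_sheet hε,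
    (measurableEmbedding_sheetPoint ε s).integral_map,
    integral_withDensity_eq_integral_toReal_smul hmeas (by simp)]
  simp [ENNReal.toReal_ofReal (sheetDensity_nonneg _ _)]

/-- The value of a radial function on the sphere `‖z‖² = u`. -/
def radialProfile (η : Spacetime m → ℝ) (u : ℝ) : ℝ :=
  η (√u • EuclideanSpace.single (Fin.last m) 1)

theorem eq_radialProfile {η : Spacetime m → ℝ} (hη : ∀ z z' : Spacetime m, ‖z‖ = ‖z'‖ → η z = η z')
    (z : Spacetime m) : η z = radialProfile η (‖z‖ ^ 2) :=
  hη _ _ (by simp [norm_smul])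

/-- The contribution of both sheets over the sphere `|ξ|² = u`, up to the oscillation in `ξ`. -/
def sheetKernel (η : Spacetime m → ℝ) (s t u : ℝ) : ℝ :=
  if s < u then sheetDensity s u * radialProfile η (2 * u - s) * (2 * cos (2 * π * t * √(u - s)))
  else 0

/-- The character `ξ ↦ e^{2πi⟨ξ,x⟩}`. -/
def character {E : Type*} [NormedAddCommGroup E] [InnerProductSpace ℝ E] (x ξ : E) : ℂ :=
  Complex.exp (2 * (π : ℂ) * Complex.I * ((⟪ξ, x⟫ : ℝ) : ℂ))

theorem sum_sheets {η : Spacetime m → ℝ} (hη : ∀ z z' : Spacetime m, ‖z‖ = ‖z'‖ → η z = η z')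
    {s : ℝ} (t : ℝ) (x : EuclideanSpace ℝ (Fin m)) {ξ : EuclideanSpace ℝ (Fin m)}
    (hξ : ξ ∈ sheetBase m s) :
    (sheetDensity s (‖ξ‖ ^ 2) : ℂ) * (η (sheetPoint 1 s ξ) *
        character (spacetimePoint x t) (sheetPoint 1 s ξ)) +
      (sheetDensity s (‖ξ‖ ^ 2) : ℂ) * (η (sheetPoint (-1) s ξ) *
        character (spacetimePoint x t) (sheetPoint (-1) s ξ)) =
      (sheetKernel η s t (‖ξ‖ ^ 2) : ℂ) * character x ξ := by
  have h0 : 0 < ‖ξ‖ ^ 2 - s := sub_pos.2 hξ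
  have hprof : ∀ ε : ℝ, ε ^ 2 = 1 →
      η (sheetPoint ε s ξ) = radialProfile η (2 * ‖ξ‖ ^ 2 - s) := fun ε hε => by
    rw [eq_radialProfile hη, sheetPoint, norm_spacetimePoint_sq, sheetHeight, mul_pow, hε,
      Real.sq_sqrt h0.le]
    congr 1; ring
  have hchar : ∀ ε : ℝ, character (spacetimePoint x t) (sheetPoint ε s ξ) = character x ξ *
      Complex.exp ((2 * π * t * √(‖ξ‖ ^ 2 - s) : ℝ) * ε * Complex.I) := fun ε => by
    rw [character, sheetPoint, inner_spacetimePoint, sheetHeight, character, ← Complex.exp_add]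
    congr 1; push_cast; ring
  rw [hprof 1 (by norm_num), hprof (-1) (by norm_num), hchar, hchar, sheetKernel,
    if_pos (show s < ‖ξ‖ ^ 2 from hξ)]
  push_cast
  rw [Complex.cos]
  ring_nf

theorem integrable_and_sigmaCheck_eq [NeZero m] {η : Spacetime m → ℝ}
    (hη : ∀ z z' : Spacetime m, ‖z‖ = ‖z'‖ → η z = η z') (s t : ℝ)
    (x : EuclideanSpace ℝ (Fin m))
    (hint : Integrable (fun z => (η z : ℂ) * character (spacetimePoint x t) z)
      (levelMeasure m s)) :
    Integrable (fun ξ => (sheetKernel η s t (‖ξ‖ ^ 2) : ℂ) * character x ξ) μH[(m : ℝ)] ∧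
      sigmaCheck η s (spacetimePoint x t) =
        ∫ ξ, (sheetKernel η s t (‖ξ‖ ^ 2) : ℂ) * character x ξ ∂μH[(m : ℝ)] := by
  have hU : MeasurableSet (sheetBase m s) := (isOpen_sheetBase s).measurableSet
  have hzero : ∀ ξ ∉ sheetBase m s,
      (sheetKernel η s t (‖ξ‖ ^ 2) : ℂ) * character x ξ = 0 := fun ξ hξ => by
    simp [sheetKernel, if_neg (show ¬ s < ‖ξ‖ ^ 2 from hξ)]
  have hint' := hint
  rw [levelMeasure_eq, integrable_add_measure] at hint'
  have h₁ := integrableOn_sheetBase_of_sheet (by norm_num) hint'.1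
  have h₂ := integrableOn_sheetBase_of_sheet (by norm_num) hint'.2
  constructor
  · have h₃ := IntegrableOn.congr_fun (h₁.add h₂) (fun ξ hξ => sum_sheets hη t x hξ) hU
    exact h₃.integrable_of_forall_notMem_eq_zero hzero
  · change ∫ z, (η z : ℂ) * character (spacetimePoint x t) z ∂(levelMeasure m s) = _
    rw [levelMeasure_eq, integral_add_measure hint'.1 hint'.2, integral_sheet (by norm_num),
      integral_sheet (by norm_num), ← integral_add h₁ h₂,
      ← setIntegral_eq_integral_of_forall_compl_eq_zero hzero]
    exact setIntegral_congr_fun hU fun ξ hξ => sum_sheets hη t x hξ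

end Reduction

section RadialReduction

variable {d : ℕ}

theorem exists_linearIsometryEquiv_inner_eq (x : EuclideanSpace ℝ (Fin (d + 1))) :
    ∃ T : EuclideanSpace ℝ (Fin (d + 1)) ≃ₗᵢ[ℝ] EuclideanSpace ℝ (Fin (d + 1)),
      ∀ ξ, ⟪T ξ, x⟫ = ξ 0 * ‖x‖ := by
  set y : EuclideanSpace ℝ (Fin (d + 1)) := ‖x‖ • EuclideanSpace.single 0 1
  have hy : ‖y‖ = ‖x‖ := by simp [y, norm_smul]
  set T := (ℝ ∙ (y - x))ᗮ.reflection
  have hT : T y = x := Submodule.reflection_sub hy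
  refine ⟨T, fun ξ => ?_⟩
  calc ⟪T ξ, x⟫ = ⟪T ξ, T y⟫ := by rw [hT]
    _ = ⟪ξ, y⟫ := T.inner_map_map ξ y
    _ = _ := by simp [y, inner_smul_right, EuclideanSpace.inner_single_right, mul_comm]

/-- Splitting off the first coordinate of a Euclidean vector. -/
def splitFirst (d : ℕ) : EuclideanSpace ℝ (Fin (d + 1)) ≃ᵐ ℝ × EuclideanSpace ℝ (Fin d) :=
  ((MeasurableEquiv.toLp 2 (Fin (d + 1) → ℝ)).symm.trans
    (MeasurableEquiv.piFinSuccAbove (fun _ => ℝ) 0)).trans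
      ((MeasurableEquiv.refl ℝ).prodCongr (MeasurableEquiv.toLp 2 (Fin d → ℝ)))

theorem splitFirst_apply (ξ : EuclideanSpace ℝ (Fin (d + 1))) :
    splitFirst d ξ = (ξ 0, WithLp.toLp 2 fun i => ξ i.succ) := rfl

theorem norm_sq_eq_splitFirst (ξ : EuclideanSpace ℝ (Fin (d + 1))) :
    ‖ξ‖ ^ 2 = (splitFirst d ξ).1 ^ 2 + ‖(splitFirst d ξ).2‖ ^ 2 := by
  simp [splitFirst_apply, EuclideanSpace.norm_sq_eq, Fin.sum_univ_succ]

theorem measurePreserving_splitFirst : MeasurePreserving (splitFirst d) :=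
  ((MeasurePreserving.id volume).prod (PiLp.volume_preserving_toLp (Fin d))).comp
    ((volume_preserving_piFinSuccAbove (fun _ => ℝ) 0).comp
      (EuclideanSpace.volume_preserving_symm_measurableEquiv_toLp (Fin (d + 1))))

theorem norm_integral_radial_mul_character_le {k : ℝ → ℝ} {x : EuclideanSpace ℝ (Fin (d + 1))}
    (hint : Integrable fun ξ => (k (‖ξ‖ ^ 2) : ℂ) * character x ξ) {B R : ℝ} (hR : 0 ≤ R)
    (hB : ∀ v, |v| ≤ R → |∫ ζ : EuclideanSpace ℝ (Fin d), k (v ^ 2 + ‖ζ‖ ^ 2)| ≤ B)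
    (hzero : ∀ v, R < |v| → ∫ ζ : EuclideanSpace ℝ (Fin d), k (v ^ 2 + ‖ζ‖ ^ 2) = 0) :
    ‖∫ ξ, (k (‖ξ‖ ^ 2) : ℂ) * character x ξ‖ ≤ B * (2 * R) := by
  obtain ⟨T, hT⟩ := exists_linearIsometryEquiv_inner_eq x
  set e : ℝ → ℂ := fun v => Complex.exp (2 * (π : ℂ) * Complex.I * ((v * ‖x‖ : ℝ) : ℂ))
  set G : ℝ × EuclideanSpace ℝ (Fin d) → ℂ := fun p => (k (p.1 ^ 2 + ‖p.2‖ ^ 2) : ℂ) * e p.1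
  have hG : ∀ ξ, (k (‖T ξ‖ ^ 2) : ℂ) * character x (T ξ) = G (splitFirst d ξ) := fun ξ => by
    simp only [G, e, character]
    rw [hT, T.norm_map, norm_sq_eq_splitFirst]
    rfl
  have hTm := T.measurePreserving
  have hTe : MeasurableEmbedding T := T.toHomeomorph.measurableEmbedding
  have hGint : Integrable G (volume.prod volume) := by
    have h := (hTm.integrable_comp_emb hTe).2 hint
    refine (measurePreserving_splitFirst.integrable_comp_emb
      (splitFirst d).measurableEmbedding).1 (h.congr (Eventually.of_forall hG))
  have hslice : ∀ v, ∫ ζ, G (v, ζ) =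
      ((∫ ζ : EuclideanSpace ℝ (Fin d), k (v ^ 2 + ‖ζ‖ ^ 2) : ℝ) : ℂ) * e v := fun v => by
    simp only [G]
    rw [integral_mul_const, integral_complex_ofReal]
  have he : ∀ v, ‖e v‖ = 1 := fun v => by
    rw [← Complex.norm_exp_ofReal_mul_I (2 * π * (v * ‖x‖))]
    simp only [e]
    congr 2; push_cast; ring
  rw [← hTm.integral_comp hTe, integral_congr_ae (Eventually.of_forall hG),
    measurePreserving_splitFirst.integral_comp (splitFirst d).measurableEmbedding,
    Measure.volume_eq_prod, integral_prod _ hGint,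
    ← setIntegral_eq_integral_of_forall_compl_eq_zero (s := Set.Icc (-R) R)]
  · refine (norm_setIntegral_le_of_norm_le_const (C := B) (by simp) fun v hv => ?_).trans_eq ?_
    · rw [hslice, norm_mul, he, mul_one, Complex.norm_real]
      exact hB v (abs_le.2 hv)
    · rw [Measure.real, Real.volume_Icc, ENNReal.toReal_ofReal (by linarith)]; ring
  · intro v hv
    rw [hslice, hzero v (not_le.1 fun h => hv (abs_le.1 h))]
    simp

end RadialReduction

section Amplitude

variable {m : ℕ}

/-- The amplitude of the one-dimensional integral in `τ`. -/
def waveAmplitude (η : Spacetime m → ℝ) (z : ℝ × ℝ × ℝ) : ℝ :=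
  √(2 * z.2.2 ^ 2 + z.1) * radialProfile η (2 * z.2.2 ^ 2 + z.1)

theorem radialProfile_eq_zero {η : Spacetime m → ℝ}
    (hη : ∀ z : Spacetime m, η z ≠ 0 → 1 / 4 ≤ ‖z‖ ∧ ‖z‖ ≤ 5 / 4) {u : ℝ}
    (hu : u < 1 / 16 ∨ 25 / 16 < u) : radialProfile η u = 0 := by
  by_contra h
  have h1 := hη _ h
  rw [norm_smul, PiLp.norm_single, norm_one, mul_one,
    Real.norm_of_nonneg (Real.sqrt_nonneg u)] at h1
  rcases hu with hu | hu
  · have : √u < 1 / 4 := (Real.sqrt_lt' (by norm_num)).2 (by linarith)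
    linarith [h1.1]
  · have : 5 / 4 < √u := Real.lt_sqrt_of_sq_lt (by linarith)
    linarith [h1.2]

theorem contDiff_sqrt_mul_radialProfile {η : Spacetime m → ℝ} (hηs : ContDiff ℝ (⊤ : ℕ∞) η)
    (hη : ∀ z : Spacetime m, η z ≠ 0 → 1 / 4 ≤ ‖z‖ ∧ ‖z‖ ≤ 5 / 4) :
    ContDiff ℝ (⊤ : ℕ∞) fun u => √u * radialProfile η u := by
  refine contDiff_iff_contDiffAt.2 fun u => ?_
  rcases lt_or_ge u (1 / 16) with hu | hu
  · refine (contDiffAt_const (c := (0 : ℝ))).congr_of_eventuallyEq ?_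
    filter_upwards [Iio_mem_nhds hu] with v hv
    rw [radialProfile_eq_zero hη (Or.inl hv), mul_zero]
  · have h : ContDiffAt ℝ (⊤ : ℕ∞) Real.sqrt u := Real.contDiffAt_sqrt (by linarith)
    exact h.mul (hηs.contDiffAt.comp u (h.smul contDiffAt_const))

theorem isAmplitude_waveAmplitude {η : Spacetime m → ℝ} (hηs : ContDiff ℝ (⊤ : ℕ∞) η)
    (hη : ∀ z : Spacetime m, η z ≠ 0 → 1 / 4 ≤ ‖z‖ ∧ ‖z‖ ≤ 5 / 4) :
    IsAmplitude (waveAmplitude η) where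
  smooth := (contDiff_sqrt_mul_radialProfile hηs hη).comp
    (by fun_prop : ContDiff ℝ (⊤ : ℕ∞) fun z : ℝ × ℝ × ℝ => 2 * z.2.2 ^ 2 + z.1)
  vanish s a τ hs hτ := by
    have h1 := (one_lt_sq_iff_one_lt_abs τ).2 hτ
    have h2 := (abs_le.1 hs).1
    rw [waveAmplitude, radialProfile_eq_zero hη (Or.inr (by simp only; linarith)), mul_zero]

/-- The change of variables `r = √(τ² - a)` in the radial integral. -/
theorem integral_pow_mul_sheetKernel (η : Spacetime m → ℝ) (j : ℕ) (s t v : ℝ) :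
    ∫ r in Set.Ioi (0 : ℝ), r ^ (j + 1) * sheetKernel η s t (v ^ 2 + r ^ 2) =
      oscInt (j / 2) (waveAmplitude η) s (v ^ 2 - s) (2 * π * t) 0 := by
  set a := v ^ 2 - s with ha
  set f : ℝ → ℝ := fun τ =>
    powPos (j / 2) (τ ^ 2 - a) * waveAmplitude η (s, a, τ) * cos (2 * π * t * τ + 0)
  set D : Set ℝ := {τ | 0 < τ ∧ a < τ ^ 2}
  have hD : MeasurableSet D :=
    measurableSet_Ioi.inter (measurableSet_lt measurable_const (measurable_id.pow_const 2))
  have hosc : oscInt (j / 2) (waveAmplitude η) s a (2 * π * t) 0 = ∫ τ in D, 2 * f τ := by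
    have h1 : oscInt (j / 2) (waveAmplitude η) s a (2 * π * t) 0 = ∫ τ, f |τ| := by
      refine integral_congr_ae (Eventually.of_forall fun τ => ?_)
      simp only [f, waveAmplitude, sq_abs, add_zero]
      rcases abs_choice τ with h | h <;> simp [h]
    rw [h1, integral_comp_abs, ← integral_const_mul]
    refine setIntegral_eq_of_subset_of_forall_sdiff_eq_zero measurableSet_Ioi (fun τ h => h.1)
      fun τ hτ => ?_
    have : τ ^ 2 - a ≤ 0 := sub_nonpos.2 (not_lt.1 fun h => hτ.2 ⟨hτ.1, h⟩)
    simp [f, powPos_of_nonpos this]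
  have himage : ∫ r in Set.Ioi (0 : ℝ), r ^ (j + 1) * sheetKernel η s t (v ^ 2 + r ^ 2) =
      ∫ r in (fun τ => √(τ ^ 2 - a)) '' D, r ^ (j + 1) * sheetKernel η s t (v ^ 2 + r ^ 2) := by
    refine setIntegral_eq_of_subset_of_forall_sdiff_eq_zero measurableSet_Ioi ?_ fun r hr => ?_
    · rintro _ ⟨τ, hτ, rfl⟩
      exact Real.sqrt_pos.2 (sub_pos.2 hτ.2)
    · rw [sheetKernel, if_neg, mul_zero]
      intro h
      have hr0 : 0 < r := hr.1
      have h0 : 0 < r ^ 2 + a := by linarith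
      refine hr.2 ⟨√(r ^ 2 + a), ⟨Real.sqrt_pos.2 h0, ?_⟩, ?_⟩
      · rw [Real.sq_sqrt h0.le]; nlinarith
      · simp only [Real.sq_sqrt h0.le, add_sub_cancel_right, Real.sqrt_sq hr0.le]
  have hderiv : ∀ τ ∈ D, HasDerivWithinAt (fun τ => √(τ ^ 2 - a)) (τ / √(τ ^ 2 - a)) D τ := by
    intro τ hτ
    have h := (((hasDerivAt_id τ).pow 2).sub_const a).sqrt (sub_pos.2 hτ.2).ne'
    refine (h.congr_deriv ?_).hasDerivWithinAt
    have : √(τ ^ 2 - a) ≠ 0 := (Real.sqrt_pos.2 (sub_pos.2 hτ.2)).ne'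
    simp
    field_simp
  have hinj : Set.InjOn (fun τ => √(τ ^ 2 - a)) D := by
    intro τ hτ σ hσ h
    have h1 := (Real.sqrt_inj (sub_pos.2 hτ.2).le (sub_pos.2 hσ.2).le).1 h
    exact (pow_left_inj₀ hτ.1.le hσ.1.le two_ne_zero).1 (by linarith)
  rw [himage, hosc, integral_image_eq_integral_abs_deriv_smul hD hderiv hinj]
  refine setIntegral_congr_fun hD fun τ hτ => ?_
  have h0 : 0 < τ ^ 2 - a := sub_pos.2 hτ.2
  have hτ0 : 0 < τ := hτ.1
  have hw : 0 < √(τ ^ 2 - a) := Real.sqrt_pos.2 h0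
  have hu : v ^ 2 + √(τ ^ 2 - a) ^ 2 = τ ^ 2 + s := by rw [Real.sq_sqrt h0.le]; linarith
  have hpow : powPos (j / 2) (τ ^ 2 - a) = √(τ ^ 2 - a) ^ j := by
    rw [powPos_of_pos h0, Real.sqrt_eq_rpow, ← rpow_natCast _ j, ← rpow_mul h0.le]
    congr 1; ring
  simp only [f, hpow, hu, waveAmplitude, smul_eq_mul]
  rw [sheetKernel, if_pos (by nlinarith), sheetDensity, add_sub_cancel_right,
    show 2 * (τ ^ 2 + s) - s = 2 * τ ^ 2 + s by ring, Real.sqrt_div' _ (sq_nonneg τ),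
    Real.sqrt_sq hτ0.le, abs_of_pos (div_pos hτ0 hw), add_zero, pow_succ]
  field_simp
  ring

theorem oscInt_waveAmplitude_eq_zero {η : Spacetime m → ℝ} (hηs : ContDiff ℝ (⊤ : ℕ∞) η)
    (hη : ∀ z : Spacetime m, η z ≠ 0 → 1 / 4 ≤ ‖z‖ ∧ ‖z‖ ≤ 5 / 4) {p s a t : ℝ}
    (hs : |s| ≤ 1 / 10) (ha : 1 < a) : oscInt p (waveAmplitude η) s a t 0 = 0 := by
  refine integral_eq_zero_of_ae (Eventually.of_forall fun τ => ?_)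
  rcases le_or_gt |τ| 1 with hτ | hτ
  · have := (sq_le_one_iff_abs_le_one τ).2 hτ
    simp [powPos_of_nonpos (show τ ^ 2 - a ≤ 0 by linarith)]
  · simp [(isAmplitude_waveAmplitude hηs hη).vanish s a τ hs hτ]

end Amplitude

theorem exists_norm_sigmaCheck_le (j : ℕ) {η : Spacetime (j + 3) → ℝ}
    (hηsm : ContDiff ℝ (⊤ : ℕ∞) η)
    (hηrad : ∀ z z' : Spacetime (j + 3), ‖z‖ = ‖z'‖ → η z = η z')
    (hηsupp : ∀ z : Spacetime (j + 3), η z ≠ 0 → 1 / 4 ≤ ‖z‖ ∧ ‖z‖ ≤ 5 / 4) :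
    ∃ C : ℝ, 0 ≤ C ∧ ∀ (x : EuclideanSpace ℝ (Fin (j + 3))) (s t : ℝ), |s| ≤ 1 / 10 →
      ‖sigmaCheck η s (spacetimePoint x t)‖ ≤ C * (1 + |t|) ^ (-((j : ℝ) / 2 + 1)) := by
  obtain ⟨C, hC0, hC⟩ := exists_oscInt_bound j (isAmplitude_waveAmplitude hηsm hηsupp)
  obtain ⟨c, hc⟩ := hausdorffMeasure_eq_smul_volume (j + 3)
  have hc0 : c ≠ 0 := by
    rintro rfl
    have h := isAddHaarMeasure_hausdorffMeasure (E := EuclideanSpace ℝ (Fin (j + 3)))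
    rw [finrank_euclideanSpace_fin, hc, zero_smul] at h
    exact NeZero.ne (0 : Measure (EuclideanSpace ℝ (Fin (j + 3)))) rfl
  set A : ℝ := (j + 2 : ℕ) * volume.real (Metric.ball (0 : EuclideanSpace ℝ (Fin (j + 2))) 1)
  have hA0 : 0 ≤ A := by positivity
  have hradial : ∀ s t v : ℝ,
      ∫ ζ : EuclideanSpace ℝ (Fin (j + 2)), sheetKernel η s t (v ^ 2 + ‖ζ‖ ^ 2) =
        A * oscInt (j / 2) (waveAmplitude η) s (v ^ 2 - s) (2 * π * t) 0 := fun s t v => by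
    rw [integral_fun_norm_addHaar volume fun r => sheetKernel η s t (v ^ 2 + r ^ 2),
      ← integral_pow_mul_sheetKernel, finrank_euclideanSpace_fin, nsmul_eq_mul, smul_eq_mul,
      ← mul_assoc]
    rfl
  refine ⟨c * (A * C * (2 * 2)), by positivity, fun x s t hs => ?_⟩
  set D : ℝ := (1 + |t|) ^ (-((j : ℝ) / 2 + 1))
  have hD0 : 0 ≤ D := by positivity
  by_cases hint : Integrable (fun z => (η z : ℂ) * character (spacetimePoint x t) z)
      (levelMeasure (j + 3) s)
  · obtain ⟨h1, h2⟩ := integrable_and_sigmaCheck_eq hηrad s t x hint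
    rw [hc] at h1
    replace h1 := (integrable_smul_measure (ENNReal.coe_ne_zero.2 hc0) ENNReal.coe_ne_top).1 h1
    rw [h2, hc, integral_smul_nnreal_measure, NNReal.smul_def, norm_smul,
      Real.norm_of_nonneg c.coe_nonneg, mul_assoc]
    refine mul_le_mul_of_nonneg_left ?_ c.coe_nonneg
    have h3 := norm_integral_radial_mul_character_le (B := A * (C * D)) (R := 2) h1 (by norm_num)
      (fun v hv => ?_) fun v hv => ?_
    · exact h3.trans_eq (by ring)
    · rw [hradial, abs_mul, abs_of_nonneg hA0]
      refine mul_le_mul_of_nonneg_left (hC s _ t hs ?_) hA0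
      have hv2 : v ^ 2 ≤ 2 ^ 2 := sq_le_sq' (abs_le.1 hv).1 (abs_le.1 hv).2
      rw [abs_le] at hs ⊢
      constructor <;> nlinarith
    · rw [hradial, oscInt_waveAmplitude_eq_zero hηsm hηsupp hs, mul_zero]
      have hv2 : 2 ^ 2 < |v| ^ 2 := pow_lt_pow_left₀ hv two_pos.le two_ne_zero
      rw [sq_abs] at hv2
      linarith [(abs_le.1 hs).2]
  · have h0 : sigmaCheck η s (spacetimePoint x t) = 0 := integral_undef hint
    rw [h0, norm_zero]
    positivity

/-- For `n ≥ 5` and any smooth radial bump function `η` supported on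
the annulus `{1/4 ≤ ‖z‖ ≤ 5/4}`, there is a constant `C > 0` (depending only on `n`
and `η`) such that for all `(x,t) ∈ ℝ^{n-1} × ℝ` and all `s ∈ (-1/10, 1/10)`,
`|(σ_s^{(0)})^∨(x,t)| ≤ C (1+|t|)^{(2-n)/2}`. -/
theorem statement4 (n m : ℕ) (hn : 5 ≤ n) (hnm : m + 1 = n)
    (η : Spacetime m → ℝ)
    (hηsm : ContDiff ℝ (⊤ : ℕ∞) η)
    (hηrad : ∀ z z' : Spacetime m, ‖z‖ = ‖z'‖ → η z = η z')
    (hηsupp : ∀ z : Spacetime m, η z ≠ 0 → 1 / 4 ≤ ‖z‖ ∧ ‖z‖ ≤ 5 / 4) :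
    ∃ C : ℝ, 0 < C ∧ ∀ (w : Spacetime m) (s : ℝ), s ∈ Set.Ioo (-(1 / 10) : ℝ) (1 / 10) →
      ‖sigmaCheck η s w‖ ≤ C * (1 + |timeCoord w|) ^ (((2 : ℝ) - n) / 2) := by
  obtain ⟨j, rfl⟩ : ∃ j, m = j + 3 := ⟨m - 3, by omega⟩
  obtain ⟨C, hC0, hC⟩ := exists_norm_sigmaCheck_le j hηsm hηrad hηsupp
  refine ⟨C + 1, by positivity, fun w s hs => ?_⟩
  obtain ⟨x, hx⟩ := exists_spacetimePoint_eq w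
  have h := hC x s (timeCoord w) (abs_le.2 ⟨hs.1.le, hs.2.le⟩)
  rw [hx] at h
  have hexp : ((2 : ℝ) - n) / 2 = -((j : ℝ) / 2 + 1) := by
    rw [← hnm]; push_cast; ring
  rw [hexp]
  exact h.trans (mul_le_mul_of_nonneg_right (by linarith) (by positivity))
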